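/- arXiv:0807.1170 — 3 statements merged into one kernel-verified Lean document; each statement's English description precedes it below -/
import Mathlib

section
/- Let p be a prime, K a finite extension of ℚ_p, and let L = K(√d) and E = K(√e) be two non-K-isomorphic quadratic extensions of K inside a fixed algebraic closure of K (i.e., d, e ∈ K* are non-squares with de ∉ (K*)²). Let LE denote the compositum of L and E, a quadratic extension of E. Then for every t ∈ E*: t ∈ N_{LE/E}((LE)*) if and only if N_{E/K}(t) ∈ N_{L/K}(L*). -/
open Module

/-- `normGroup K L` is the set of norms `N_{L/K}(t)` of nonzero elements `t ∈ L`. -/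
def normGroup (K L : Type*) [Field K] [Field L] [Algebra K L] : Set K :=
  {x : K | ∃ t : L, t ≠ 0 ∧ Algebra.norm K t = x}

/-!
Comparing `x ↦ x ^ 2` on the unit group `Kˣ` of a local field `K` with its restriction to the
subgroup of finite index `c ^ ℤ × (1 + b O)`, on which it is injective, gives
`[Kˣ : Kˣ²] = 4 * [O : 2 O]`. Applied to `K` and to `K(√a)`, this shows that the group of norms
from `K(√a)` has index two in `Kˣ`.

The forms `u ^ 2 - d v ^ 2` and `u ^ 2 - d e v ^ 2` therefore have distinct value groups of index
two: otherwise, by the symmetry of the Hilbert symbol, `e` would have trivial symbol with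
everything. Their product is `Kˣ`, and both consist of norms from `LE` to `E`, so all of `Kˣ` does.
Finally, if `N t = u ^ 2 - d v ^ 2`, the quadratic equation of `t` over `K` gives
`(t + u) ^ 2 - d v ^ 2 = t * (Tr t + 2 u)`, so `t` is a norm up to a factor in `K`.
-/

section Group

variable {A B : Type*} [CommGroup A] [CommGroup B]

@[to_additive]
theorem monoidHom_card_inf_ker {φ : B →* A} (hφ : Function.Injective φ) {f : A →* A} {g : B →* B}
    (hfg : f.comp φ = φ.comp g) : Nat.card ↥(φ.range ⊓ f.ker) = Nat.card g.ker := by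
  rw [← Subgroup.map_comap_eq, MonoidHom.comap_ker, hfg, ← MonoidHom.comap_ker,
    (MonoidHom.ker_eq_bot_iff φ).2 hφ]
  exact Subgroup.card_map_of_injective hφ

@[to_additive addMonoidHom_index_range_mul_card_ker]
theorem monoidHom_index_range_mul_card_ker {φ : B →* A} (hφ : Function.Injective φ)
    (hindex : φ.range.index ≠ 0) {f : A →* A} {g : B →* B} (hfg : f.comp φ = φ.comp g) :
    f.range.index * Nat.card g.ker = Nat.card f.ker * g.range.index := by
  have hmap : φ.range.map f = g.range.map φ := by
    rw [← MonoidHom.range_comp, ← MonoidHom.range_comp, hfg]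
  have hg : g.range.index * φ.range.index = (φ.range.map f).index := by
    rw [hmap, ← Subgroup.relIndex_mul_index (Subgroup.map_le_range φ g.range),
      MonoidHom.range_eq_map φ, Subgroup.relIndex_map_map_of_injective _ _ hφ,
      Subgroup.relIndex_top_right]
  have hf : (φ.range ⊔ f.ker).index * f.range.index = (φ.range.map f).index := by
    rw [← Subgroup.relIndex_mul_index (Subgroup.map_le_range f φ.range), MonoidHom.range_eq_map f,
      Subgroup.relIndex_map_map, top_sup_eq, Subgroup.relIndex_top_right]
  have hsup : φ.range.relIndex f.ker * (φ.range ⊔ f.ker).index = φ.range.index := by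
    rw [← Subgroup.relIndex_mul_index (le_sup_left : φ.range ≤ φ.range ⊔ f.ker),
      Subgroup.relIndex_sup_left]
  have hker : Nat.card g.ker * φ.range.relIndex f.ker = Nat.card f.ker := by
    rw [← monoidHom_card_inf_ker hφ hfg, ← Subgroup.relIndex_bot_left,
      ← Subgroup.relIndex_bot_left, ← Subgroup.inf_relIndex_right φ.range,
      Subgroup.relIndex_mul_relIndex _ _ _ bot_le inf_le_right]
  refine mul_left_cancel₀ (right_ne_zero_of_mul (hsup ▸ hindex)) ?_
  calc (φ.range ⊔ f.ker).index * (f.range.index * Nat.card g.ker)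
      = g.range.index * φ.range.index * Nat.card g.ker := by rw [← mul_assoc, hf, hg]
    _ = (φ.range ⊔ f.ker).index * (Nat.card f.ker * g.range.index) := by
      rw [← hsup, ← hker]; ring

theorem addMonoidHom_index_range_eq_of_injective {A B : Type*} [AddCommGroup A] [AddCommGroup B]
    {φ : B →+ A} (hφ : Function.Injective φ) (hindex : φ.range.index ≠ 0) {f : A →+ A}
    (hf : Function.Injective f) {g : B →+ B} (hfg : f.comp φ = φ.comp g) :
    f.range.index = g.range.index := by
  have hker := (AddMonoidHom.ker_eq_bot_iff f).2 hf
  have hker' := addMonoidHom_card_inf_ker hφ hfg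
  have hindices := addMonoidHom_index_range_mul_card_ker hφ hindex hfg
  rw [hker, inf_bot_eq, AddSubgroup.card_bot] at hker'
  rwa [hker, ← hker', AddSubgroup.card_bot, mul_one, one_mul] at hindices

theorem range_powMonoidHom_prod (n : ℕ) :
    (powMonoidHom n : A × B →* A × B).range =
      (powMonoidHom n : A →* A).range.prod (powMonoidHom n : B →* B).range := by
  ext ⟨x, y⟩
  simp [Subgroup.mem_prod, Prod.ext_iff]

theorem index_range_powMonoidHom_two_int :
    (powMonoidHom 2 : Multiplicative ℤ →* Multiplicative ℤ).range.index = 2 := by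
  have := Int.index_zmultiples 2
  rw [← Nat.cast_ofNat (R := ℤ), ← Int.range_nsmulAddMonoidHom] at this
  exact this

theorem index_range_nsmulAddMonoidHom_pi {ι : Type*} [Fintype ι] (G : Type*) [AddCommGroup G]
    (n : ℕ) :
    (nsmulAddMonoidHom n : (ι → G) →+ (ι → G)).range.index =
      (nsmulAddMonoidHom n : G →+ G).range.index ^ Fintype.card ι := by
  have h : (nsmulAddMonoidHom n : (ι → G) →+ (ι → G)).range =
      AddSubgroup.pi Set.univ fun _ ↦ (nsmulAddMonoidHom n : G →+ G).range := by
    ext x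
    simp [AddSubgroup.mem_pi, funext_iff, Classical.skolem]
  simp [h, AddSubgroup.index_pi]

theorem index_range_powMonoidHom_subgroup (H : Subgroup A) (n : ℕ) :
    (powMonoidHom n : H →* H).range.index = (H.map (powMonoidHom n)).relIndex H := by
  rw [Subgroup.relIndex, Subgroup.subgroupOf_map_powMonoidHom_eq_range]

end Group

theorem card_ker_powMonoidHom_two_units (K : Type*) [Field K] [NeZero (2 : K)] :
    Nat.card (powMonoidHom 2 : Kˣ →* Kˣ).ker = 2 := by
  have h : ((powMonoidHom 2 : Kˣ →* Kˣ).ker : Set Kˣ) = {1, -1} := by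
    ext x
    rw [Set.mem_insert_iff, Set.mem_singleton_iff, ← Units.sq_eq_sq_iff_eq_or_eq_neg, one_pow]
    rfl
  rw [← SetLike.coe_sort_coe, h, Nat.card_coe_set_eq, Set.ncard_pair]
  rw [Ne, Units.ext_iff, Units.val_neg, Units.val_one, eq_neg_iff_add_eq_zero, one_add_one_eq_two]
  exact two_ne_zero

theorem subgroup_index_ne_zero_of_isOpen_of_isCompact {G : Type*} [Group G] [TopologicalSpace G]
    [IsTopologicalGroup G] {H : Subgroup G} (hH : IsOpen (H : Set G)) {S : Set G}
    (hS : IsCompact S) (hSH : ∀ x, ∃ y ∈ S, y⁻¹ * x ∈ H) : H.index ≠ 0 := by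
  have : DiscreteTopology (G ⧸ H) := QuotientGroup.discreteTopology hH
  have hmap : QuotientGroup.mk '' S = (Set.univ : Set (G ⧸ H)) := by
    refine Set.eq_univ_of_forall fun q ↦ ?_
    obtain ⟨x, rfl⟩ := QuotientGroup.mk_surjective q
    obtain ⟨y, hyS, hyx⟩ := hSH x
    exact ⟨y, hyS, QuotientGroup.eq.2 hyx⟩
  have : CompactSpace (G ⧸ H) := ⟨hmap ▸ hS.image QuotientGroup.continuous_mk⟩
  exact Subgroup.index_ne_zero_iff_finite.2 finite_of_compact_of_discrete

section ClosedUnitBall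

/-- The elements of norm at most one; for a field `K` this is the additive group of the ring of
integers of `K`. -/
def closedUnitBall (V : Type*) [SeminormedAddCommGroup V] [IsUltrametricDist V] : AddSubgroup V :=
  (IsUltrametricDist.closedBall_openAddSubgroup V one_pos).toAddSubgroup

theorem mem_closedUnitBall {V : Type*} [SeminormedAddCommGroup V] [IsUltrametricDist V] {x : V} :
    x ∈ closedUnitBall V ↔ ‖x‖ ≤ 1 :=
  mem_closedBall_zero_iff

theorem mem_range_nsmul_closedUnitBall_iff {K : Type*} [NormedField K] [IsUltrametricDist K]
    {n : ℕ} (hn : (n : K) ≠ 0) {x : closedUnitBall K} :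
    x ∈ (nsmulAddMonoidHom n : closedUnitBall K →+ closedUnitBall K).range ↔
      ‖(x : K)‖ ≤ ‖(n : K)‖ := by
  have hn' : 0 < ‖(n : K)‖ := norm_pos_iff.2 hn
  constructor
  · rintro ⟨y, rfl⟩
    simpa using mul_le_of_le_one_right hn'.le (mem_closedUnitBall.1 y.2)
  · intro hx
    refine ⟨⟨x / n, mem_closedUnitBall.2 ?_⟩, Subtype.ext ?_⟩
    · rwa [norm_div, div_le_one hn']
    · simp [mul_div_cancel₀, hn]

instance compactSpace_closedUnitBall (V : Type*) [SeminormedAddCommGroup V] [IsUltrametricDist V]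
    [ProperSpace V] : CompactSpace (closedUnitBall V) :=
  isCompact_iff_compactSpace.1 (isCompact_closedBall (0 : V) 1)

theorem index_range_nsmul_closedUnitBall_ne_zero {K : Type*} [NormedField K] [IsUltrametricDist K]
    [ProperSpace K] {n : ℕ} (hn : (n : K) ≠ 0) :
    (nsmulAddMonoidHom n : closedUnitBall K →+ closedUnitBall K).range.index ≠ 0 := by
  refine AddSubgroup.index_ne_zero_iff_finite.2 (AddSubgroup.quotient_finite_of_isOpen _
    (AddSubgroup.isOpen_of_mem_nhds (g := 0) _ ?_))
  filter_upwards [Metric.closedBall_mem_nhds 0 (norm_pos_iff.2 hn)] with x hx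
  rw [SetLike.mem_coe, mem_range_nsmul_closedUnitBall_iff hn]
  simpa using hx

end ClosedUnitBall

section Lattice

variable {K : Type*} [NontriviallyNormedField K] [IsUltrametricDist K]
  {V : Type*} [NormedAddCommGroup V] [NormedSpace K V] [IsUltrametricDist V]

theorem exists_injective_addMonoidHom_pi_closedUnitBall [ProperSpace K] [FiniteDimensional K V] :
    ∃ φ : (Fin (finrank K V) → closedUnitBall K) →+ closedUnitBall V,
      Function.Injective φ ∧ φ.range.index ≠ 0 := by
  have : ProperSpace V := FiniteDimensional.proper K V
  let e : V ≃L[K] (Fin (finrank K V) → K) := ContinuousLinearEquiv.ofFinrankEq (by simp)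
  obtain ⟨C, hC0, hC⟩ := e.symm.toContinuousLinearMap.bound
  obtain ⟨c, hc0, hc⟩ := NormedField.exists_norm_lt K (inv_pos.2 hC0)
  have hc0 : c ≠ 0 := norm_pos_iff.1 hc0
  have hnorm (x : Fin (finrank K V) → closedUnitBall K) : ‖e.symm (c • fun i ↦ (x i : K))‖ ≤ 1 :=
    calc ‖e.symm (c • fun i ↦ (x i : K))‖
      _ ≤ C * (‖c‖ * ‖fun i ↦ (x i : K)‖) := by
        simpa only [norm_smul] using! hC (c • fun i ↦ (x i : K))
      _ ≤ C * (C⁻¹ * 1) := by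
        gcongr
        exact (pi_norm_le_iff_of_nonneg zero_le_one).2 fun i ↦ mem_closedUnitBall.1 (x i).2
      _ = 1 := by field_simp
  let φ : (Fin (finrank K V) → closedUnitBall K) →+ closedUnitBall V :=
    AddMonoidHom.mk' (fun x ↦ ⟨e.symm (c • fun i ↦ (x i : K)), mem_closedUnitBall.2 (hnorm x)⟩)
      fun x y ↦ Subtype.ext <| by
        simp [← map_add, ← smul_add, Pi.add_def]
  have hφ (x) : e (φ x) = c • fun i ↦ (x i : K) := e.apply_symm_apply _
  refine ⟨φ, fun x y hxy ↦ funext fun i ↦ Subtype.ext ?_,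
    AddSubgroup.index_ne_zero_iff_finite.2 (AddSubgroup.quotient_finite_of_isOpen _
      (AddSubgroup.isOpen_of_mem_nhds (g := 0) _ ?_))⟩
  · exact congrFun (smul_right_injective _ hc0 ((hφ x).symm.trans (hxy ▸ hφ y))) i
  · have hcont : Continuous fun v : closedUnitBall V ↦ c⁻¹ • e v := by fun_prop
    filter_upwards [hcont.continuousAt.preimage_mem_nhds (Metric.closedBall_mem_nhds _ one_pos)]
      with v hv
    have hv : ‖c⁻¹ • e v‖ ≤ 1 := by simpa using hv
    refine ⟨fun i ↦ ⟨(c⁻¹ • e v) i,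
      mem_closedUnitBall.2 ((norm_le_pi_norm _ i).trans hv)⟩, Subtype.ext (e.injective ?_)⟩
    rw [hφ]
    exact smul_inv_smul₀ hc0 (e v)

theorem index_range_nsmul_closedUnitBall [ProperSpace K] [FiniteDimensional K V] {n : ℕ}
    (hn : (n : K) ≠ 0) :
    (nsmulAddMonoidHom n : closedUnitBall V →+ closedUnitBall V).range.index =
      (nsmulAddMonoidHom n : closedUnitBall K →+ closedUnitBall K).range.index ^ finrank K V := by
  obtain ⟨φ, hφ, hindex⟩ := exists_injective_addMonoidHom_pi_closedUnitBall (K := K) (V := V)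
  have hcomm : (nsmulAddMonoidHom n : closedUnitBall V →+ _).comp φ =
      φ.comp (nsmulAddMonoidHom n) := by
    ext
    simp
  have hinj : Function.Injective (nsmulAddMonoidHom n : closedUnitBall V →+ closedUnitBall V) := by
    intro x y hxy
    refine Subtype.ext (smul_right_injective V hn ?_)
    simpa [Nat.cast_smul_eq_nsmul] using congrArg Subtype.val hxy
  rw [addMonoidHom_index_range_eq_of_injective hφ hindex hinj hcomm,
    index_range_nsmulAddMonoidHom_pi, Fintype.card_fin]

end Lattice

section CongruenceUnits

variable {K : Type*} [NormedField K] [IsUltrametricDist K]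

/-- The group of units congruent to `1` modulo the ideal generated by `b` in the ring of integers
of `K`. The condition `‖x‖ = 1` follows from the other one when `‖b‖ < 1`, and makes this a
subgroup for every `b`. -/
def congruenceUnits (b : K) : Subgroup Kˣ where
  carrier := {x | ‖(x : K)‖ = 1 ∧ ‖(x : K) - 1‖ ≤ ‖b‖}
  one_mem' := by simp
  mul_mem' := by
    rintro x y ⟨hx, hx1⟩ ⟨hy, hy1⟩
    refine ⟨by simp [hx, hy], ?_⟩
    have h : ((x * y : Kˣ) : K) - 1 = x * (y - 1) + (x - 1) := by rw [Units.val_mul]; ring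
    rw [h]
    refine (IsUltrametricDist.norm_add_le_max _ _).trans (max_le ?_ hx1)
    rwa [norm_mul, hx, one_mul]
  inv_mem' := by
    rintro x ⟨hx, hx1⟩
    refine ⟨by simp [hx], ?_⟩
    have h : ((x⁻¹ : Kˣ) : K) - 1 = -(x : K)⁻¹ * (x - 1) := by
      rw [Units.val_inv_eq_inv_val]
      field_simp
      ring
    rw [h, norm_mul, norm_neg, norm_inv, hx]
    simpa using hx1

theorem mem_congruenceUnits {b : K} {x : Kˣ} :
    x ∈ congruenceUnits b ↔ ‖(x : K)‖ = 1 ∧ ‖(x : K) - 1‖ ≤ ‖b‖ :=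
  Iff.rfl

theorem norm_eq_one_of_norm_sub_one_lt_one {x : K} (h : ‖x - 1‖ < 1) : ‖x‖ = 1 := by
  have := IsUltrametricDist.norm_add_eq_max_of_norm_ne_norm (x := x - 1) (y := 1)
    (by rw [norm_one]; exact h.ne)
  rwa [sub_add_cancel, norm_one, max_eq_right h.le] at this

theorem exists_mem_congruenceUnits_coe_eq_one_add {b y : K} (hb : ‖b‖ < 1) (hy : ‖y‖ ≤ ‖b‖) :
    ∃ x ∈ congruenceUnits b, (x : K) = 1 + y := by
  have hnorm : ‖1 + y‖ = 1 := norm_eq_one_of_norm_sub_one_lt_one <| by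
    rw [add_sub_cancel_left]
    exact hy.trans_lt hb
  exact ⟨.mk0 (1 + y) (norm_ne_zero_iff.1 (by simp [hnorm])), ⟨hnorm, by simpa using hy⟩, rfl⟩

theorem inv_mul_mem_congruenceUnits_iff {b : K} {x y : Kˣ} (hx : ‖(x : K)‖ = 1)
    (hy : ‖(y : K)‖ = 1) : x⁻¹ * y ∈ congruenceUnits b ↔ ‖(y - x : K)‖ ≤ ‖b‖ := by
  have h : ((x⁻¹ * y : Kˣ) : K) - 1 = (x : K)⁻¹ * (y - x) := by
    rw [mul_sub, inv_mul_cancel₀ x.ne_zero]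
    simp
  rw [mem_congruenceUnits, h, norm_mul, norm_inv, hx, inv_one, one_mul]
  simp [hx, hy]

theorem relIndex_congruenceUnits {n : ℕ} (hn : (n : K) ≠ 0) {b : K} (hb0 : b ≠ 0) (hb : ‖b‖ < 1) :
    (congruenceUnits (n * b)).relIndex (congruenceUnits b) =
      (nsmulAddMonoidHom n : closedUnitBall K →+ closedUnitBall K).range.index := by
  let f (u : congruenceUnits b) : closedUnitBall K := ⟨((u : Kˣ) - 1 : K) / b, by
    rw [mem_closedUnitBall, norm_div, div_le_one (norm_pos_iff.2 hb0)]
    exact u.2.2⟩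
  have hf (u v : congruenceUnits b) :
      -f u + f v ∈ (nsmulAddMonoidHom n : closedUnitBall K →+ closedUnitBall K).range ↔
        u⁻¹ * v ∈ (congruenceUnits (n * b)).subgroupOf (congruenceUnits b) := by
    have hsub : ((-f u + f v : closedUnitBall K) : K) = ((v : Kˣ) - (u : Kˣ) : K) / b := by
      simp only [AddSubgroup.coe_add, NegMemClass.coe_neg, f]
      ring
    rw [mem_range_nsmul_closedUnitBall_iff hn, hsub, norm_div, div_le_iff₀ (norm_pos_iff.2 hb0),
      ← norm_mul, Subgroup.mem_subgroupOf]
    exact (inv_mul_mem_congruenceUnits_iff u.2.1 v.2.1).symm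
  have hsurj (y : closedUnitBall K) : ∃ u, f u = y := by
    obtain ⟨x, hx, hxy⟩ := exists_mem_congruenceUnits_coe_eq_one_add hb
      (y := b * y) (by
        simpa using mul_le_of_le_one_right (norm_nonneg b) (mem_closedUnitBall.1 y.2))
    exact ⟨⟨x, hx⟩, Subtype.ext (by simp [f, hxy, hb0])⟩
  refine Nat.card_eq_of_bijective
    (Quotient.map f fun u v huv ↦ QuotientAddGroup.leftRel_apply.2
      ((hf u v).2 (QuotientGroup.leftRel_apply.1 huv))) ⟨?_, ?_⟩
  · rintro ⟨u⟩ ⟨v⟩ huv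
    exact QuotientGroup.eq.2 ((hf u v).1 (QuotientAddGroup.eq.1 huv))
  · rintro ⟨y⟩
    obtain ⟨u, rfl⟩ := hsurj y
    exact ⟨QuotientGroup.mk u, rfl⟩

theorem pow_two_mem_congruenceUnits {b : K} (hb : ‖b‖ ≤ ‖(2 : K)‖) {x : Kˣ}
    (hx : x ∈ congruenceUnits b) : x ^ 2 ∈ congruenceUnits (2 * b) := by
  refine ⟨by simp [hx.1], ?_⟩
  have h : ((x ^ 2 : Kˣ) : K) - 1 = ((x - 1) + 2) * (x - 1) := by
    rw [Units.val_pow_eq_pow_val]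
    ring
  rw [h, norm_mul, norm_mul]
  gcongr
  · exact (IsUltrametricDist.norm_add_le_max _ _).trans (max_le (hx.2.trans hb) le_rfl)
  · exact hx.2

/- The equation reads `u = z / 2 - u ^ 2 / 2`, and its right-hand side contracts the ball. -/
theorem exists_add_one_sq_eq_of_norm_le [CompleteSpace K] {b : K} (hb : ‖b‖ < ‖(2 : K)‖) {z : K}
    (hz : ‖z‖ ≤ ‖2 * b‖) : ∃ u, ‖u‖ ≤ ‖b‖ ∧ (1 + u) ^ 2 = 1 + z := by
  have h2 : 0 < ‖(2 : K)‖ := (norm_nonneg b).trans_lt hb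
  let f (u : K) : K := z / 2 - u ^ 2 / 2
  let s : Set K := Metric.closedBall 0 ‖b‖
  have hmaps : Set.MapsTo f s s := by
    intro u hu
    rw [mem_closedBall_zero_iff] at hu ⊢
    have hf : f u = z / 2 + -(u ^ 2 / 2) := sub_eq_add_neg _ _
    rw [hf]
    refine (IsUltrametricDist.norm_add_le_max _ _).trans (max_le ?_ ?_)
    · rwa [norm_div, div_le_iff₀' h2, ← norm_mul]
    · rw [norm_neg, norm_div, norm_pow, div_le_iff₀ h2, sq]
      gcongr
      exact hu.trans hb.le
  have hcontr : ContractingWith (‖b‖₊ / ‖(2 : K)‖₊) (hmaps.restrict f s s) := by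
    refine ⟨(div_lt_one (by exact_mod_cast h2)).2 (by exact_mod_cast hb),
      LipschitzWith.of_dist_le_mul ?_⟩
    rintro ⟨u, hu⟩ ⟨v, hv⟩
    rw [mem_closedBall_zero_iff] at hu hv
    have h : f u - f v = -((u + v) / 2 * (u - v)) := by simp only [f]; ring
    rw [Subtype.dist_eq, Subtype.dist_eq, dist_eq_norm, dist_eq_norm,
      Set.MapsTo.val_restrict_apply, Set.MapsTo.val_restrict_apply, h, norm_neg, norm_mul, norm_div]
    simp only [NNReal.coe_div, coe_nnnorm]
    gcongr
    exact (IsUltrametricDist.norm_add_le_max _ _).trans (max_le hu hv)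
  obtain ⟨u, hu, hfix, -⟩ := hcontr.exists_fixedPoint' Metric.isClosed_closedBall.isComplete
    hmaps (x := 0) (mem_closedBall_zero_iff.2 (by simp)) (edist_ne_top _ _)
  refine ⟨u, mem_closedBall_zero_iff.1 hu, ?_⟩
  have hfix : z / 2 - u ^ 2 / 2 = u := hfix
  have h2 : (2 : K) ≠ 0 := norm_pos_iff.1 h2
  field_simp at hfix
  linear_combination -hfix

theorem map_powMonoidHom_two_congruenceUnits [CompleteSpace K] {b : K} (hb : ‖b‖ < ‖(2 : K)‖) :
    (congruenceUnits b).map (powMonoidHom 2) = congruenceUnits (2 * b) := by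
  refine le_antisymm ?_ fun z hz ↦ ?_
  · rintro _ ⟨x, hx, rfl⟩
    exact pow_two_mem_congruenceUnits hb.le hx
  · obtain ⟨u, hu, hu2⟩ := exists_add_one_sq_eq_of_norm_le hb hz.2
    have hb1 : ‖b‖ < 1 := hb.trans_le (by exact_mod_cast IsUltrametricDist.norm_natCast_le_one K 2)
    obtain ⟨x, hx, hxu⟩ := exists_mem_congruenceUnits_coe_eq_one_add hb1 hu
    exact ⟨x, hx, Units.ext (by simp [hxu, hu2])⟩

theorem index_range_powMonoidHom_two_congruenceUnits [CompleteSpace K] {b : K} (hb0 : b ≠ 0)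
    (hb : ‖b‖ < ‖(2 : K)‖) :
    (powMonoidHom 2 : congruenceUnits b →* congruenceUnits b).range.index =
      (nsmulAddMonoidHom 2 : closedUnitBall K →+ closedUnitBall K).range.index := by
  have h2 : ((2 : ℕ) : K) ≠ 0 := norm_pos_iff.1 (by exact_mod_cast (norm_nonneg b).trans_lt hb)
  rw [index_range_powMonoidHom_subgroup, map_powMonoidHom_two_congruenceUnits hb,
    ← relIndex_congruenceUnits h2 hb0
      (hb.trans_le (by exact_mod_cast IsUltrametricDist.norm_natCast_le_one K 2)), Nat.cast_ofNat]

theorem eq_one_of_sq_eq_one_of_mem_congruenceUnits {b : K} (hb : ‖b‖ < ‖(2 : K)‖) {x : Kˣ}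
    (hx : x ∈ congruenceUnits b) (hx2 : x ^ 2 = 1) : x = 1 := by
  rw [← one_pow 2, Units.sq_eq_sq_iff_eq_or_eq_neg] at hx2
  refine hx2.resolve_right fun h ↦ hb.not_ge ?_
  have := hx.2
  rwa [h, Units.val_neg, Units.val_one, ← neg_add', one_add_one_eq_two, norm_neg] at this

end CongruenceUnits

theorem isCompact_units_val_preimage {K : Type*} [NormedField K] {S : Set K} (hS : IsCompact S)
    (h0 : 0 ∉ S) : IsCompact (Units.val ⁻¹' S : Set Kˣ) := by
  refine Units.isEmbedding_val₀.isCompact_iff.2 ?_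
  rwa [Set.image_preimage_eq_of_subset]
  exact fun x hx ↦ ⟨.mk0 x (ne_of_mem_of_not_mem hx h0), rfl⟩

section UnitDecomposition

variable {K : Type*} [NormedField K] [IsUltrametricDist K]

theorem isOpen_congruenceUnits {b : K} (hb : b ≠ 0) : IsOpen (congruenceUnits b : Set Kˣ) := by
  refine Subgroup.isOpen_of_mem_nhds (g := 1) _ ?_
  have hr : 0 < min ‖b‖ 2⁻¹ := by positivity
  filter_upwards [Units.continuous_val.continuousAt.preimage_mem_nhds
    (Metric.closedBall_mem_nhds _ hr)] with x hx
  obtain ⟨hxb, hx2⟩ := le_min_iff.1 (mem_closedBall_iff_norm.1 hx)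
  exact ⟨norm_eq_one_of_norm_sub_one_lt_one (hx2.trans_lt (by norm_num)), hxb⟩

/-- The homomorphism `(n, v) ↦ c ^ n * v`. When `1 < ‖c‖` and `b ≠ 0` it identifies
`ℤ × congruenceUnits b` with a subgroup of finite index in the unit group of a local field. -/
def zpowMulCongruenceUnits (c : Kˣ) (b : K) : Multiplicative ℤ × congruenceUnits b →* Kˣ :=
  (zpowersHom Kˣ c).coprod (congruenceUnits b).subtype

theorem zpowMulCongruenceUnits_apply (c : Kˣ) (b : K) (x : Multiplicative ℤ × congruenceUnits b) :
    zpowMulCongruenceUnits c b x = c ^ x.1.toAdd * x.2 :=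
  rfl

theorem zpowMulCongruenceUnits_injective {c : Kˣ} (hc : 1 < ‖(c : K)‖) (b : K) :
    Function.Injective (zpowMulCongruenceUnits c b) := by
  rw [injective_iff_map_eq_one]
  rintro ⟨n, v⟩ h
  rw [zpowMulCongruenceUnits_apply] at h
  have hn : n.toAdd = 0 := by
    have hnorm : ‖(c : K)‖ ^ n.toAdd = 1 := by
      simpa [v.2.1] using congrArg (fun x : Kˣ ↦ ‖(x : K)‖) h
    exact (zpow_eq_one_iff_right₀ (norm_nonneg _) hc.ne').1 hnorm
  simp only [hn, zpow_zero, one_mul] at h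
  exact Prod.ext hn (Subtype.ext h)

theorem congruenceUnits_le_range_zpowMulCongruenceUnits (c : Kˣ) (b : K) :
    congruenceUnits b ≤ (zpowMulCongruenceUnits c b).range := fun v hv ↦
  ⟨(1, ⟨v, hv⟩), by simp [zpowMulCongruenceUnits_apply]⟩

theorem index_range_zpowMulCongruenceUnits_ne_zero [ProperSpace K] {c : Kˣ} (hc : 1 < ‖(c : K)‖)
    {b : K} (hb : b ≠ 0) : (zpowMulCongruenceUnits c b).range.index ≠ 0 := by
  let S : Set K := Metric.closedBall 0 1 \ Metric.ball 0 (1 / ‖(c : K)‖)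
  have hS : IsCompact (Units.val ⁻¹' S : Set Kˣ) :=
    isCompact_units_val_preimage ((isCompact_closedBall 0 1).diff Metric.isOpen_ball) (by simp [S])
  refine subgroup_index_ne_zero_of_isOpen_of_isCompact
    (Subgroup.isOpen_mono (congruenceUnits_le_range_zpowMulCongruenceUnits c b)
      (isOpen_congruenceUnits hb)) hS fun x ↦ ?_
  obtain ⟨n, -, hle, hge, -⟩ :=
    rescale_to_shell_semi_normed_zpow hc one_pos (norm_ne_zero_iff.2 x.ne_zero)
  refine ⟨c ^ n * x, ⟨?_, ?_⟩, (.ofAdd (-n), 1), ?_⟩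
  · simpa using hle.le
  · simpa using hge
  · simp [zpowMulCongruenceUnits_apply, mul_comm]

theorem card_ker_powMonoidHom_two_prod_congruenceUnits {b : K} (hb : ‖b‖ < ‖(2 : K)‖) :
    Nat.card (powMonoidHom 2 : Multiplicative ℤ × congruenceUnits b →* _).ker = 1 := by
  rw [Subgroup.card_eq_one, eq_bot_iff]
  rintro ⟨n, v⟩ h
  have hn : n ^ 2 = 1 := congrArg Prod.fst h
  have hv : v ^ 2 = 1 := congrArg Prod.snd h
  refine Prod.ext ?_ (Subtype.ext (eq_one_of_sq_eq_one_of_mem_congruenceUnits hb v.2 ?_))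
  · simpa using hn
  · simpa using congrArg Subtype.val hv

end UnitDecomposition

theorem index_range_powMonoidHom_two_units (K : Type*) [NontriviallyNormedField K]
    [IsUltrametricDist K] [ProperSpace K] [NeZero (2 : K)] :
    (powMonoidHom 2 : Kˣ →* Kˣ).range.index =
      4 * (nsmulAddMonoidHom 2 : closedUnitBall K →+ closedUnitBall K).range.index := by
  obtain ⟨c, hc⟩ := NormedField.exists_one_lt_norm K
  lift c to Kˣ using (norm_pos_iff.1 (one_pos.trans hc)).isUnit
  set b : K := 2 / c with hb_def
  have hb0 : b ≠ 0 := div_ne_zero two_ne_zero c.ne_zero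
  have hb : ‖b‖ < ‖(2 : K)‖ := by
    rw [hb_def, norm_div]
    exact div_lt_self (norm_pos_iff.2 two_ne_zero) hc
  have hcomm : (powMonoidHom 2 : Kˣ →* Kˣ).comp (zpowMulCongruenceUnits c b) =
      (zpowMulCongruenceUnits c b).comp (powMonoidHom 2) :=
    MonoidHom.ext fun x ↦ (map_pow (zpowMulCongruenceUnits c b) x 2).symm
  have h := monoidHom_index_range_mul_card_ker (zpowMulCongruenceUnits_injective hc b)
    (index_range_zpowMulCongruenceUnits_ne_zero hc hb0) hcomm
  have hsq : (powMonoidHom 2 : Multiplicative ℤ × congruenceUnits b →* _).range.index =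
      2 * (nsmulAddMonoidHom 2 : closedUnitBall K →+ closedUnitBall K).range.index := by
    rw [range_powMonoidHom_prod, Subgroup.index_prod, index_range_powMonoidHom_two_int,
      index_range_powMonoidHom_two_congruenceUnits hb0 hb]
  rw [card_ker_powMonoidHom_two_prod_congruenceUnits hb, mul_one,
    card_ker_powMonoidHom_two_units, hsq, ← mul_assoc] at h
  exact h

section Quadratic

variable {F : Type*} [Field F]

theorem sq_eq_mul_trace_sub_norm_of_finrank_eq_two {A : Type*} [CommRing A] [Algebra F A]
    (hA : finrank F A = 2) (t : A) :
    t ^ 2 = t * algebraMap F A (Algebra.trace F A t) - algebraMap F A (Algebra.norm F t) := by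
  have : FiniteDimensional F A := .of_finrank_pos (by omega)
  let b := finBasisOfFinrankEq F A hA
  have h := (Algebra.leftMulMatrix b t).aeval_self_charpoly
  rw [Polynomial.aeval_algHom_apply, Matrix.charpoly_fin_two, ← Algebra.trace_eq_matrix_trace,
    ← Algebra.norm_eq_matrix_det, map_eq_zero_iff _ (Algebra.leftMulMatrix_injective b)] at h
  simp only [map_add, map_sub, map_mul, map_pow, Polynomial.aeval_X, Polynomial.aeval_C] at h
  linear_combination h

theorem add_algebraMap_sq_of_finrank_eq_two {A : Type*} [CommRing A] [Algebra F A]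
    (hA : finrank F A = 2) (t : A) (u : F) :
    (t + algebraMap F A u) ^ 2 = t * algebraMap F A (Algebra.trace F A t + 2 * u) +
      algebraMap F A (u ^ 2 - Algebra.norm F t) := by
  simp only [map_add, map_sub, map_mul, map_pow, map_ofNat]
  linear_combination sq_eq_mul_trace_sub_norm_of_finrank_eq_two hA t

theorem nonempty_quadraticAlgebra_algHom {A : Type*} [CommRing A] [Algebra F A] {a : F} {s : A}
    (hs : s ^ 2 = algebraMap F A a) :
    Nonempty (QuadraticAlgebra F a 0 →ₐ[F] A) :=
  ⟨QuadraticAlgebra.lift ⟨s, by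
    rw [zero_smul, add_zero, ← sq, hs, Algebra.algebraMap_eq_smul_one]⟩⟩

variable {M : Type*} [Field M] [Algebra F M]

theorem comap_norm_range_powMonoidHom_two (hM : finrank F M = 2) :
    (powMonoidHom 2 : Fˣ →* Fˣ).range.comap (Units.map (Algebra.norm F : M →* F)) =
      (Units.map (algebraMap F M : F →* M)).range ⊔ (powMonoidHom 2 : Mˣ →* Mˣ).range := by
  refine le_antisymm ?_ (sup_le ?_ ?_)
  · rintro z ⟨c, hc⟩
    have hnorm : (c : F) ^ 2 = Algebra.norm F (z : M) := congrArg Units.val hc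
    have hsq := add_algebraMap_sq_of_finrank_eq_two hM (z : M) c
    rw [hnorm, sub_self, map_zero, add_zero] at hsq
    by_cases hw : (z : M) + algebraMap F M c = 0
    · refine Subgroup.mem_sup_left ⟨-c, Units.ext ?_⟩
      simp [eq_neg_of_add_eq_zero_left hw]
    · have hk : Algebra.trace F M (z : M) + 2 * c ≠ 0 := fun hk ↦ by simp [hk, hw] at hsq
      have hz : z * Units.map (algebraMap F M : F →* M) (.mk0 _ hk) = .mk0 _ hw ^ 2 :=
        Units.ext hsq.symm
      rw [eq_mul_inv_of_mul_eq hz]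
      exact mul_mem (Subgroup.mem_sup_right ⟨_, rfl⟩) (Subgroup.mem_sup_left (inv_mem ⟨_, rfl⟩))
  · rintro _ ⟨c, rfl⟩
    exact ⟨c, Units.ext (by simp [Algebra.norm_algebraMap, hM])⟩
  · rintro _ ⟨z, rfl⟩
    exact ⟨Units.map (Algebra.norm F : M →* F) z, by simp⟩

theorem fact_sq_ne_of_not_isSquare {a : F} (ha : ¬IsSquare a) :
    Fact (∀ r : F, r ^ 2 ≠ a + 0 * r) :=
  ⟨fun r hr ↦ ha ⟨r, by rw [← pow_two, hr, zero_mul, add_zero]⟩⟩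

theorem nonempty_quadraticAlgebra_algEquiv {a : F} (ha : ¬IsSquare a) {s : M}
    (hs : s ^ 2 = algebraMap F M a) (hM : finrank F M = 2) :
    Nonempty (QuadraticAlgebra F a 0 ≃ₐ[F] M) := by
  have := fact_sq_ne_of_not_isSquare ha
  have : FiniteDimensional F M := .of_finrank_pos (by omega)
  obtain ⟨f⟩ := nonempty_quadraticAlgebra_algHom hs
  exact ⟨.ofBijective f ⟨f.toRingHom.injective,
    (LinearMap.injective_iff_surjective_of_finrank_eq_finrank (f := f.toLinearMap)
      (by rw [hM, QuadraticAlgebra.finrank_eq_two])).1 f.toRingHom.injective⟩⟩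

theorem isSquare_algebraMap_quadraticAlgebra_iff [NeZero (2 : F)] {a : F} (ha : a ≠ 0) {c : F} :
    IsSquare (algebraMap F (QuadraticAlgebra F a 0) c) ↔ IsSquare c ∨ IsSquare (c * a) := by
  constructor
  · rintro ⟨z, hz⟩
    have hre : c = z.re * z.re + a * z.im * z.im := by simpa using congrArg QuadraticAlgebra.re hz
    have him : z.re * z.im = 0 := by
      have : 0 = z.re * z.im + z.im * z.re := by simpa using congrArg QuadraticAlgebra.im hz
      exact (mul_eq_zero.1 (by linear_combination -this : 2 * (z.re * z.im) = 0)).resolve_left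
        two_ne_zero
    rcases mul_eq_zero.1 him with h | h
    · exact .inr ⟨a * z.im, by rw [hre, h]; ring⟩
    · exact .inl ⟨z.re, by rw [hre, h]; ring⟩
  · rintro (h | ⟨x, hx⟩)
    · exact h.map (algebraMap F _)
    · refine ⟨⟨0, x / a⟩, QuadraticAlgebra.ext ?_ ?_⟩
      · simp only [QuadraticAlgebra.algebraMap_re, QuadraticAlgebra.mk_mul_mk, mul_zero, zero_add]
        field_simp
        linear_combination hx
      · simp

theorem isSquare_algebraMap_iff [NeZero (2 : F)] {a : F} (ha : ¬IsSquare a) {s : M}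
    (hs : s ^ 2 = algebraMap F M a) (hM : finrank F M = 2) {c : F} :
    IsSquare (algebraMap F M c) ↔ IsSquare c ∨ IsSquare (c * a) := by
  obtain ⟨φ⟩ := nonempty_quadraticAlgebra_algEquiv ha hs hM
  have ha0 : a ≠ 0 := fun h ↦ ha (h ▸ .zero)
  rw [← isSquare_algebraMap_quadraticAlgebra_iff ha0, ← φ.commutes]
  exact ⟨fun h ↦ by simpa using h.map φ.symm, fun h ↦ h.map φ⟩

theorem mem_range_powMonoidHom_two_iff {c : Fˣ} :
    c ∈ (powMonoidHom 2 : Fˣ →* Fˣ).range ↔ IsSquare (c : F) := by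
  constructor
  · rintro ⟨x, rfl⟩
    exact ⟨x, by simp [sq]⟩
  · rintro ⟨x, hx⟩
    have hx0 : x ≠ 0 := by
      rintro rfl
      exact c.ne_zero (hx.trans (mul_zero 0))
    exact ⟨.mk0 x hx0, Units.ext (by simp [hx, sq])⟩

theorem relIndex_range_powMonoidHom_two_comap [NeZero (2 : F)] {a : F} (ha : ¬IsSquare a) {s : M}
    (hs : s ^ 2 = algebraMap F M a) (hM : finrank F M = 2) :
    (powMonoidHom 2 : Fˣ →* Fˣ).range.relIndex
      ((powMonoidHom 2 : Mˣ →* Mˣ).range.comap (Units.map (algebraMap F M : F →* M))) = 2 := by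
  have hcomap (c : Fˣ) : c ∈ (powMonoidHom 2 : Mˣ →* Mˣ).range.comap
      (Units.map (algebraMap F M : F →* M)) ↔ IsSquare (c : F) ∨ IsSquare (c * a : F) := by
    rw [Subgroup.mem_comap, mem_range_powMonoidHom_two_iff, ← isSquare_algebraMap_iff ha hs hM]
    rfl
  have ha0 : a ≠ 0 := fun h ↦ ha (h ▸ .zero)
  refine Subgroup.relIndex_eq_two_iff.2
    ⟨.mk0 a ha0, (hcomap _).2 (.inr ⟨a, rfl⟩), fun b hb ↦ ?_⟩
  rw [mem_range_powMonoidHom_two_iff, mem_range_powMonoidHom_two_iff, Units.val_mul,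
    Units.val_mk0]
  refine (xor_iff_or_and_not_and _ _).2 ⟨((hcomap b).1 hb).symm, fun ⟨hba, hb⟩ ↦ ha ?_⟩
  simpa using hba.div hb

theorem index_range_norm_mul [NeZero (2 : F)] {a : F} (ha : ¬IsSquare a) {s : M}
    (hs : s ^ 2 = algebraMap F M a) (hM : finrank F M = 2) :
    (Units.map (Algebra.norm F : M →* F)).range.index *
      (2 * (powMonoidHom 2 : Mˣ →* Mˣ).range.index) =
        (powMonoidHom 2 : Fˣ →* Fˣ).range.index ^ 2 := by
  set ι := Units.map (algebraMap F M : F →* M)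
  set N := Units.map (Algebra.norm F : M →* F)
  set SF := (powMonoidHom 2 : Fˣ →* Fˣ).range
  set SM := (powMonoidHom 2 : Mˣ →* Mˣ).range
  have hSFN : SF ≤ N.range := by
    rintro _ ⟨c, rfl⟩
    exact ⟨ι c, Units.ext (by simp [N, ι, Algebra.norm_algebraMap, hM])⟩
  have hSFι : SF ≤ SM.comap ι := by
    rintro _ ⟨c, rfl⟩
    exact ⟨ι c, by simp⟩
  have hN : SF.relIndex N.range * (SM.comap ι).index = SM.index := by
    rw [← Subgroup.index_comap, comap_norm_range_powMonoidHom_two hM, Subgroup.index_comap,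
      ← Subgroup.relIndex_sup_right, mul_comm]
    exact Subgroup.relIndex_mul_index le_sup_right
  calc N.range.index * (2 * SM.index)
      = (SF.relIndex N.range * N.range.index) * (2 * (SM.comap ι).index) := by rw [← hN]; ring
    _ = SF.index ^ 2 := by
      rw [Subgroup.relIndex_mul_index hSFN, sq, ← Subgroup.relIndex_mul_index hSFι,
        relIndex_range_powMonoidHom_two_comap ha hs hM]

end Quadratic

section NormForm

variable {F : Type*} [Field F]

/-- The group of nonzero values of the binary form `u ^ 2 - a * v ^ 2`, presented as the norms of
the units of `F[X] / (X ^ 2 - a)`. It is the norm group of `F(√a)` when `a` is not a square, and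
membership of `b` in it is the triviality of the Hilbert symbol of `a` and `b`. -/
def normFormSubgroup (a : F) : Subgroup Fˣ :=
  (Units.map (QuadraticAlgebra.norm : QuadraticAlgebra F a 0 →* F)).range

theorem mem_normFormSubgroup {a : F} {x : Fˣ} :
    x ∈ normFormSubgroup a ↔ ∃ u v : F, (x : F) = u ^ 2 - a * v ^ 2 := by
  have hnorm (z : QuadraticAlgebra F a 0) :
      QuadraticAlgebra.norm z = z.re ^ 2 - a * z.im ^ 2 := by
    rw [QuadraticAlgebra.norm_def]
    ring
  constructor
  · rintro ⟨z, rfl⟩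
    exact ⟨_, _, hnorm z⟩
  · rintro ⟨u, v, hx⟩
    have hunit : IsUnit (⟨u, v⟩ : QuadraticAlgebra F a 0) := by
      rw [QuadraticAlgebra.isUnit_iff_norm_isUnit, hnorm]
      exact hx ▸ x.isUnit
    exact ⟨hunit.unit, Units.ext ((hnorm _).trans hx.symm)⟩

theorem range_norm_eq_normFormSubgroup {M : Type*} [Field M] [Algebra F M] {a : F}
    (ha : ¬IsSquare a) {s : M} (hs : s ^ 2 = algebraMap F M a) (hM : finrank F M = 2) :
    (Units.map (Algebra.norm F : M →* F)).range = normFormSubgroup a := by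
  obtain ⟨φ⟩ := nonempty_quadraticAlgebra_algEquiv ha hs hM
  have hnorm (z) : Algebra.norm F (φ z) = QuadraticAlgebra.norm z :=
    (Algebra.norm_eq_of_algEquiv φ z).trans (QuadraticAlgebra.det_toLinearMap_eq_norm z)
  ext x
  constructor
  · rintro ⟨z, rfl⟩
    exact ⟨Units.map (φ.symm : M →* QuadraticAlgebra F a 0) z,
      Units.ext ((hnorm _).symm.trans (by simp))⟩
  · rintro ⟨z, rfl⟩
    exact ⟨Units.map (φ : QuadraticAlgebra F a 0 →* M) z, Units.ext (hnorm z)⟩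

theorem coe_mem_normGroup_iff {M : Type*} [Field M] [Algebra F M] {a : F} (ha : ¬IsSquare a) {s : M}
    (hs : s ^ 2 = algebraMap F M a) (hM : finrank F M = 2) {x : Fˣ} :
    (x : F) ∈ normGroup F M ↔ x ∈ normFormSubgroup a := by
  rw [← range_norm_eq_normFormSubgroup ha hs hM]
  constructor
  · rintro ⟨z, hz, hzx⟩
    exact ⟨.mk0 z hz, Units.ext hzx⟩
  · rintro ⟨z, rfl⟩
    exact ⟨z, z.ne_zero, rfl⟩

theorem mem_normFormSubgroup_comm [NeZero (2 : F)] {a b : Fˣ} :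
    a ∈ normFormSubgroup (b : F) ↔ b ∈ normFormSubgroup (a : F) := by
  suffices h : ∀ a b : Fˣ, a ∈ normFormSubgroup (b : F) → b ∈ normFormSubgroup (a : F) from
    ⟨h a b, h b a⟩
  intro a b hab
  have h2 : (2 : F) ≠ 0 := two_ne_zero
  obtain ⟨u, v, h⟩ := mem_normFormSubgroup.1 hab
  rw [mem_normFormSubgroup]
  rcases eq_or_ne v 0 with rfl | hv
  · have hu : u ≠ 0 := by
      rintro rfl
      exact a.ne_zero (by rw [h]; ring)
    refine ⟨(b + 1) / 2, (b - 1) / (2 * u), ?_⟩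
    rw [h]
    field_simp
    ring
  · refine ⟨u / v, 1 / v, ?_⟩
    field_simp
    linear_combination h

theorem normFormSubgroup_eq_top_of_isSquare [NeZero (2 : F)] {a : Fˣ} (ha : IsSquare (a : F)) :
    normFormSubgroup (a : F) = ⊤ := by
  obtain ⟨r, hr⟩ := ha
  refine eq_top_iff.2 fun x _ ↦ mem_normFormSubgroup_comm.1 (mem_normFormSubgroup.2 ⟨r, 0, ?_⟩)
  rw [hr]
  ring

end NormForm

section LocalField

variable {K : Type*} [NontriviallyNormedField K] [IsUltrametricDist K] [ProperSpace K]
  [NeZero (2 : K)]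

theorem index_range_powMonoidHom_two_units_of_finiteDimensional (M : Type*) [Field M] [Algebra K M]
    [FiniteDimensional K M] :
    (powMonoidHom 2 : Mˣ →* Mˣ).range.index =
      4 * (nsmulAddMonoidHom 2 : closedUnitBall K →+ closedUnitBall K).range.index ^
        finrank K M := by
  let : NontriviallyNormedField M := spectralNorm.nontriviallyNormedField K M
  let : NormedAlgebra K M := spectralNorm.normedAlgebra K M
  have : IsUltrametricDist M := IsUltrametricDist.isUltrametricDist_of_isNonarchimedean_norm
    isNonarchimedean_spectralNorm
  have : ProperSpace M := FiniteDimensional.proper K M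
  have : NeZero (2 : M) := ⟨by
    simpa only [map_ofNat] using (map_ne_zero (algebraMap K M)).2 two_ne_zero⟩
  rw [index_range_powMonoidHom_two_units, index_range_nsmul_closedUnitBall (K := K) (V := M)
    (mod_cast two_ne_zero)]

theorem index_normFormSubgroup {a : K} (ha : ¬IsSquare a) : (normFormSubgroup a).index = 2 := by
  have := fact_sq_ne_of_not_isSquare ha
  have hM : finrank K (QuadraticAlgebra K a 0) = 2 := QuadraticAlgebra.finrank_eq_two a 0
  have hs : (QuadraticAlgebra.omega : QuadraticAlgebra K a 0) ^ 2 = algebraMap K _ a := by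
    rw [sq, QuadraticAlgebra.omega_mul_omega_eq_algebraMap]
    simp
  have h2 : ((2 : ℕ) : K) ≠ 0 := mod_cast two_ne_zero
  have hindex := index_range_norm_mul ha hs hM
  rw [range_norm_eq_normFormSubgroup ha hs hM,
    index_range_powMonoidHom_two_units_of_finiteDimensional (K := K), hM,
    index_range_powMonoidHom_two_units] at hindex
  refine mul_right_cancel₀ (pow_ne_zero 2 (index_range_nsmul_closedUnitBall_ne_zero h2)) ?_
  linarith

theorem not_normFormSubgroup_mul_le {d e : Kˣ} (hd : ¬IsSquare (d : K)) (he : ¬IsSquare (e : K))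
    (hde : ¬IsSquare (d * e : K)) :
    ¬normFormSubgroup (d * e : K) ≤ normFormSubgroup (d : K) := by
  intro hle
  have heq : normFormSubgroup (d * e : K) = normFormSubgroup (d : K) := by
    have hrel := Subgroup.relIndex_mul_index hle
    rw [index_normFormSubgroup hd, index_normFormSubgroup hde] at hrel
    exact hle.antisymm (Subgroup.relIndex_eq_one.1 (by omega))
  have htop : normFormSubgroup (e : K) = ⊤ := by
    refine eq_top_iff.2 fun f _ ↦ mem_normFormSubgroup_comm.1 ?_
    by_cases hf : IsSquare (f : K)
    · rw [normFormSubgroup_eq_top_of_isSquare hf]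
      trivial
    · have hmul : d * e ∈ normFormSubgroup (f : K) ↔ d ∈ normFormSubgroup (f : K) := by
        rw [mem_normFormSubgroup_comm, mem_normFormSubgroup_comm (a := d), Units.val_mul, heq]
      rw [Subgroup.mul_mem_iff_of_index_two (index_normFormSubgroup hf)] at hmul
      tauto
  simpa [htop] using index_normFormSubgroup he

theorem normFormSubgroup_sup_normFormSubgroup_mul {d e : Kˣ} (hd : ¬IsSquare (d : K))
    (he : ¬IsSquare (e : K)) (hde : ¬IsSquare (d * e : K)) :
    normFormSubgroup (d : K) ⊔ normFormSubgroup (d * e : K) = ⊤ := by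
  have hd2 := index_normFormSubgroup hd
  obtain ⟨g, hg, hgd⟩ := Set.not_subset.1 (not_normFormSubgroup_mul_le hd he hde)
  refine eq_top_iff.2 fun c _ ↦ ?_
  by_cases hc : c ∈ normFormSubgroup (d : K)
  · exact Subgroup.mem_sup_left hc
  · rw [← inv_mul_cancel_right c g]
    refine mul_mem (Subgroup.mem_sup_left ?_) (Subgroup.mem_sup_right hg)
    rw [Subgroup.mul_mem_iff_of_index_two hd2, inv_mem_iff]
    exact iff_of_false hc hgd

end LocalField

section NormPrinciple

theorem norm_mem_normGroup_of_algHom {K L E M : Type*} [Field K] [Field L] [Field E] [Field M]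
    [Algebra K L] [Algebra K E] [Algebra K M] [Algebra E M] [IsScalarTower K E M] (f : L →ₐ[K] M)
    {t : E} (ht : t ∈ normGroup E M) : Algebra.norm K t ∈ normGroup K L := by
  let : Algebra L M := (f : L →+* M).toAlgebra
  have : IsScalarTower K L M := .of_algebraMap_eq fun x ↦ (f.commutes x).symm
  obtain ⟨z, hz, rfl⟩ := ht
  refine ⟨Algebra.norm L z, (hz.isUnit.map (Algebra.norm L)).ne_zero, ?_⟩
  rw [Algebra.norm_norm, Algebra.norm_norm]

variable {F M : Type*} [Field F] [Field M] [Algebra F M]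

theorem normFormSubgroup_le_comap_algebraMap (a : F) :
    normFormSubgroup a ≤
      (normFormSubgroup (algebraMap F M a)).comap (Units.map (algebraMap F M : F →* M)) := by
  intro x hx
  obtain ⟨u, v, h⟩ := mem_normFormSubgroup.1 hx
  exact mem_normFormSubgroup.2 ⟨algebraMap F M u, algebraMap F M v, by simp [h]⟩

theorem normFormSubgroup_mul_sq_le (a s : F) : normFormSubgroup (a * s ^ 2) ≤ normFormSubgroup a :=
  fun x hx ↦ by
    obtain ⟨u, v, h⟩ := mem_normFormSubgroup.1 hx
    exact mem_normFormSubgroup.2 ⟨u, s * v, by rw [h]; ring⟩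

theorem range_algebraMap_le_normFormSubgroup {a b : F}
    (hsup : normFormSubgroup a ⊔ normFormSubgroup (a * b) = ⊤) {s : M}
    (hs : s ^ 2 = algebraMap F M b) :
    (Units.map (algebraMap F M : F →* M)).range ≤ normFormSubgroup (algebraMap F M a) := by
  rw [MonoidHom.range_eq_map, Subgroup.map_le_iff_le_comap, ← hsup]
  refine sup_le (normFormSubgroup_le_comap_algebraMap a)
    ((normFormSubgroup_le_comap_algebraMap (a * b)).trans (Subgroup.comap_mono ?_))
  rw [map_mul, ← hs]
  exact normFormSubgroup_mul_sq_le _ _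

theorem mem_normFormSubgroup_algebraMap (hM : finrank F M = 2) {a : F}
    (ha : ¬IsSquare (algebraMap F M a))
    (hF : (Units.map (algebraMap F M : F →* M)).range ≤ normFormSubgroup (algebraMap F M a))
    {t : Mˣ} (ht : Units.map (Algebra.norm F : M →* F) t ∈ normFormSubgroup a) :
    t ∈ normFormSubgroup (algebraMap F M a) := by
  obtain ⟨u, v, huv⟩ := mem_normFormSubgroup.1 ht
  have huv : u ^ 2 - Algebra.norm F (t : M) = a * v ^ 2 := by
    rw [show Algebra.norm F (t : M) = u ^ 2 - a * v ^ 2 from huv]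
    ring
  have hform := add_algebraMap_sq_of_finrank_eq_two hM (t : M) u
  rw [huv, map_mul, map_pow] at hform
  by_cases hk : Algebra.trace F M (t : M) + 2 * u = 0
  · rw [hk, map_zero, mul_zero, zero_add] at hform
    have hv : algebraMap F M v = 0 := by
      by_contra hv
      refine ha ⟨(t + algebraMap F M u) / algebraMap F M v, ?_⟩
      field_simp
      exact hform.symm
    have htu : (t : M) = algebraMap F M (-u) := by
      rw [hv, zero_pow two_ne_zero, mul_zero, sq_eq_zero_iff] at hform
      rw [map_neg]
      exact eq_neg_of_add_eq_zero_left hform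
    have hu : -u ≠ 0 := fun hu ↦ t.ne_zero (by rw [htu, hu, map_zero])
    exact hF ⟨.mk0 _ hu, Units.ext htu.symm⟩
  · rw [← mul_mem_cancel_right (hF ⟨.mk0 _ hk, rfl⟩), mem_normFormSubgroup]
    exact ⟨_, _, (sub_eq_of_eq_add hform).symm⟩

end NormPrinciple

theorem stmt_1_general
    (K : Type*) [NontriviallyNormedField K] [IsUltrametricDist K] [ProperSpace K] [NeZero (2 : K)]
    (d e : K) (hd : ¬ IsSquare d) (he : ¬ IsSquare e) (hde : ¬ IsSquare (d * e))
    (L : Type*) [Field L] [Algebra K L] (hL2 : finrank K L = 2)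
    (hLd : ∃ s : L, s ^ 2 = algebraMap K L d)
    (E : Type*) [Field E] [Algebra K E] (hE2 : finrank K E = 2)
    (hEe : ∃ s : E, s ^ 2 = algebraMap K E e)
    (LE : Type*) [Field LE] [Algebra E LE] [Algebra K LE] [IsScalarTower K E LE]
    (hLE2 : finrank E LE = 2)
    (hLEd : ∃ s : LE, s ^ 2 = algebraMap K LE d) :
    ∀ t : E, t ≠ 0 →
      (t ∈ normGroup E LE ↔ Algebra.norm K t ∈ normGroup K L) := by
  obtain ⟨sL, hsL⟩ := hLd
  obtain ⟨sE, hsE⟩ := hEe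
  obtain ⟨sLE, hsLE⟩ := hLEd
  intro t ht
  constructor
  · obtain ⟨φ⟩ := nonempty_quadraticAlgebra_algEquiv hd hsL hL2
    obtain ⟨f⟩ := nonempty_quadraticAlgebra_algHom hsLE
    exact norm_mem_normGroup_of_algHom (f.comp φ.symm.toAlgHom)
  · lift t to Eˣ using ht.isUnit
    lift d to Kˣ using (ne_of_apply_ne IsSquare (by simpa using hd)).isUnit
    lift e to Kˣ using (ne_of_apply_ne IsSquare (by simpa using he)).isUnit
    have hdE : ¬IsSquare (algebraMap K E d) := by
      simp [isSquare_algebraMap_iff he hsE hE2, hd, hde]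
    have hsup := normFormSubgroup_sup_normFormSubgroup_mul hd he hde
    have hsLE : sLE ^ 2 = algebraMap E LE (algebraMap K E d) := by
      rw [hsLE, ← IsScalarTower.algebraMap_apply]
    intro hNt
    refine (coe_mem_normGroup_iff hdE hsLE hLE2).2 (mem_normFormSubgroup_algebraMap hE2 hdE
      (range_algebraMap_le_normFormSubgroup hsup hsE) ?_)
    exact (coe_mem_normGroup_iff hd hsL hL2).1 hNt

/-- Lemma 2.2 (main step): for non-isomorphic quadratic extensions `L = K(√d)` and
`E = K(√e)` of a `p`-adic field `K`, with compositum `LE` (a quadratic extension of `E`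
containing `√d`), an element `t ∈ E*` is a norm from `LE` if and only if
`N_{E/K}(t)` is a norm from `L`. -/
theorem stmt_1 (p : ℕ) [Fact p.Prime]
    (K : Type*) [Field K] [Algebra ℚ_[p] K] [FiniteDimensional ℚ_[p] K]
    (d e : K) (hd0 : d ≠ 0) (he0 : e ≠ 0)
    (hd : ¬ IsSquare d) (he : ¬ IsSquare e) (hde : ¬ IsSquare (d * e))
    (L : Type*) [Field L] [Algebra K L] (hL2 : finrank K L = 2)
    (hLd : ∃ s : L, s ^ 2 = algebraMap K L d)
    (E : Type*) [Field E] [Algebra K E] (hE2 : finrank K E = 2)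
    (hEe : ∃ s : E, s ^ 2 = algebraMap K E e)
    (LE : Type*) [Field LE] [Algebra E LE] [Algebra K LE] [IsScalarTower K E LE]
    (hLE2 : finrank E LE = 2)
    (hLEd : ∃ s : LE, s ^ 2 = algebraMap K LE d) :
    ∀ t : E, t ≠ 0 →
      (t ∈ normGroup E LE ↔ Algebra.norm K t ∈ normGroup K L) := by
  let : NontriviallyNormedField K := spectralNorm.nontriviallyNormedField ℚ_[p] K
  let : NormedAlgebra ℚ_[p] K := spectralNorm.normedAlgebra ℚ_[p] K
  have : IsUltrametricDist K := IsUltrametricDist.isUltrametricDist_of_isNonarchimedean_norm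
    isNonarchimedean_spectralNorm
  have : ProperSpace K := FiniteDimensional.proper ℚ_[p] K
  have : CharZero K := charZero_of_injective_algebraMap (algebraMap ℚ_[p] K).injective
  exact stmt_1_general K d e hd he hde L hL2 hLd E hE2 hEe LE hLE2 hLEd
end

section
/- Let p be an odd prime, K a finite extension of ℚ_p with normalized discrete valuation v_K, and let F/K be a ramified quadratic extension. Let π_F be a uniformizer of F and set π_K = N_{F/K}(π_F), a uniformizer of K. Then an element x ∈ K* belongs to N_{F/K}(F*) if and only if x·π_K^{−v_K(x)} is a square in K*. -/
open Module

/-- `v` is the normalized discrete valuation of the `p`-adic field `K`. -/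
def IsNormalizedValuation (p : ℕ) [Fact p.Prime] {K : Type*} [Field K] [Algebra ℚ_[p] K]
    (v : K → ℤ) : Prop :=
  (∀ x y : K, x ≠ 0 → y ≠ 0 → v (x * y) = v x + v y) ∧
  (∀ x y : K, x ≠ 0 → y ≠ 0 → x + y ≠ 0 → min (v x) (v y) ≤ v (x + y)) ∧
  (∀ n : ℤ, ∃ x : K, x ≠ 0 ∧ v x = n) ∧
  0 < v (algebraMap ℚ_[p] K (p : ℚ_[p]))

/-!
Let `F / K` be totally ramified of degree `n` prime to `p`. The powers `1, π, …, π ^ (n - 1)` of a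
uniformizer have valuations that are distinct modulo `n`, so they form a basis of `F / K`, and in
the expansion of any `t ≠ 0` one term dominates: `t = a * π ^ i * (1 + z)` with `a ∈ K` and `z` in
the maximal ideal. Since `n` is prime to `p`, the principal unit `1 + z` is an `n`-th power `y ^ n`,
and hence `N(t) = N(π) ^ i * (a * N(y)) ^ n`: the norm group is generated by `N(π)` and the `n`-th
powers.
-/

section Valuations

open WithZero

variable {K : Type*} [Field K]

lemma one_add_ne_zero_of_valuation_lt_one {Γ₀ : Type*} [LinearOrderedCommGroupWithZero Γ₀]
    (w : Valuation K Γ₀) {z : K} (hz : w z < 1) : 1 + z ≠ 0 :=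
  w.ne_zero_iff.mp (by simp [w.map_one_add_of_lt hz])

lemma valuation_eq_one_of_forall_coprime_exists_pow_eq (w : Valuation K ℤᵐ⁰)
    {p : ℕ} (hp : p ≠ 0) {x : K} (hx : x ≠ 0)
    (hpow : ∀ n : ℕ, p.Coprime n → ∃ y : K, y ^ n = x) : w x = 1 := by
  set m := (log (w x)).natAbs
  obtain ⟨y, hy⟩ := hpow (p * m + 1) (by simp)
  have hdvd : ((p * m + 1 : ℕ) : ℤ) ∣ log (w x) := ⟨log (w y), by simp [← hy, log_pow]⟩
  have hlt : |log (w x)| < (p * m + 1 : ℕ) := by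
    rw [Int.abs_eq_natAbs]
    exact_mod_cast Nat.lt_succ_of_le (Nat.le_mul_of_pos_left m (Nat.pos_of_ne_zero hp))
  rw [← exp_log ((Valuation.ne_zero_iff w).mpr hx), Int.eq_zero_of_abs_lt_dvd hdvd hlt, exp_zero]

-- The hypothesis on `f` makes the term of largest valuation strictly dominant.
lemma exists_sum_eq_mul_one_add {Γ₀ ι : Type*} [LinearOrderedCommGroupWithZero Γ₀]
    [Fintype ι] (w : Valuation K Γ₀) {f : ι → K}
    (hinj : ∀ i j, f i ≠ 0 → w (f i) = w (f j) → i = j) (hne : ∃ i, f i ≠ 0) :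
    ∃ i z, f i ≠ 0 ∧ w z < 1 ∧ ∑ j, f j = f i * (1 + z) := by
  classical
  obtain ⟨i₀, hi₀⟩ := hne
  obtain ⟨i, -, hmax⟩ := Finset.univ.exists_max_image (fun j ↦ w (f j)) ⟨i₀, Finset.mem_univ i₀⟩
  have hwi : 0 < w (f i) := (w.pos_iff.mpr hi₀).trans_le (hmax i₀ (Finset.mem_univ i₀))
  have hi : f i ≠ 0 := w.pos_iff.mp hwi
  refine ⟨i, (∑ j ∈ Finset.univ.erase i, f j) / f i, hi, ?_, ?_⟩
  · rw [map_div₀, div_lt_one₀ hwi]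
    refine w.map_sum_lt' hwi fun j hj ↦ (hmax j (Finset.mem_univ j)).lt_of_ne fun hij ↦ ?_
    exact Finset.ne_of_mem_erase hj (hinj i j hi hij.symm).symm
  · rw [mul_add, mul_one, mul_div_cancel₀ _ hi, Finset.add_sum_erase _ _ (Finset.mem_univ i)]

end Valuations

section UltrametricField

open Filter Topology WithZero

lemma norm_pow_sub_one_le {K : Type*} [NormedField K] [IsUltrametricDist K] {u : K}
    (hu : ‖u‖ ≤ 1) (n : ℕ) : ‖u ^ n - 1‖ ≤ ‖u - 1‖ := by
  rw [← geom_sum_mul, norm_mul]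
  refine mul_le_of_le_one_left (norm_nonneg _) ?_
  refine IsUltrametricDist.norm_sum_le_of_forall_le_of_nonneg zero_le_one fun i _ ↦ ?_
  simpa using pow_le_one₀ (norm_nonneg u) hu

lemma norm_pow_sub_one_le_max_mul {K : Type*} [NormedField K] [IsUltrametricDist K] {u : K}
    (hu : ‖u‖ ≤ 1) (n : ℕ) : ‖u ^ n - 1‖ ≤ max ‖(n : K)‖ ‖u - 1‖ * ‖u - 1‖ := by
  have hsum : ∑ i ∈ Finset.range n, u ^ i = n + ∑ i ∈ Finset.range n, (u ^ i - 1) := by simp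
  rw [← geom_sum_mul, norm_mul, hsum]
  gcongr
  refine (IsUltrametricDist.norm_add_le_max _ _).trans (max_le_max le_rfl ?_)
  exact IsUltrametricDist.norm_sum_le_of_forall_le_of_nonneg (norm_nonneg _)
    fun i _ ↦ norm_pow_sub_one_le hu i

lemma tendsto_pow_pow_nhds_one {K : Type*} [NormedField K] [IsUltrametricDist K] {p : ℕ}
    (hp : ‖(p : K)‖ < 1) {u : K} (hu : ‖u - 1‖ < 1) :
    Tendsto (fun k ↦ u ^ p ^ k) atTop (𝓝 1) := by
  set r := max ‖(p : K)‖ ‖u - 1‖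
  have hr : r < 1 := max_lt hp hu
  have hu1 : ‖u‖ ≤ 1 := by
    simpa using (IsUltrametricDist.norm_add_le_max (u - 1) 1).trans (max_le hu.le norm_one.le)
  have hbound (k : ℕ) : ‖u ^ p ^ k - 1‖ ≤ r ^ k := by
    induction k with
    | zero => simpa using hu.le
    | succ k ih =>
      have hk : ‖u ^ p ^ k‖ ≤ 1 := by simpa using pow_le_one₀ (norm_nonneg u) hu1
      calc ‖u ^ p ^ (k + 1) - 1‖ = ‖(u ^ p ^ k) ^ p - 1‖ := by rw [pow_succ, pow_mul]
        _ ≤ max ‖(p : K)‖ ‖u ^ p ^ k - 1‖ * ‖u ^ p ^ k - 1‖ := norm_pow_sub_one_le_max_mul hk p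
        _ ≤ r * r ^ k := by
          gcongr
          exact max_le_max le_rfl (norm_pow_sub_one_le hu1 _)
        _ = r ^ (k + 1) := (pow_succ' r k).symm
  rw [tendsto_iff_norm_sub_tendsto_zero]
  exact squeeze_zero (fun _ ↦ norm_nonneg _) hbound
    (tendsto_pow_atTop_nhds_zero_of_lt_one (by positivity) hr)

lemma range_pow_mem_nhds_one {K : Type*} [NontriviallyNormedField K] [CompleteSpace K] {n : ℕ}
    (hn : (n : K) ≠ 0) : Set.range (fun x : K ↦ x ^ n) ∈ 𝓝 1 := by
  have hmap := (hasStrictDerivAt_pow n (1 : K)).map_nhds_eq (by simpa)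
  rw [one_pow] at hmap
  exact hmap ▸ range_mem_map

lemma natCast_ne_zero_of_coprime_of_norm_lt_one {K : Type*} [NormedField K]
    [IsUltrametricDist K] {p n : ℕ} (hp : ‖(p : K)‖ < 1) (hpn : p.Coprime n) : (n : K) ≠ 0 := by
  intro hn
  have hbezout := congrArg (Int.cast : ℤ → K) (Nat.gcd_eq_gcd_ab p n)
  rw [hpn.gcd_eq_one] at hbezout
  push_cast at hbezout
  rw [hn, zero_mul, add_zero] at hbezout
  have hlt : ‖(p : K) * (p.gcdA n : K)‖ < 1 := by
    rw [norm_mul]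
    exact mul_lt_one_of_nonneg_of_lt_one_left (norm_nonneg _) hp
      (IsUltrametricDist.norm_intCast_le_one K _)
  rw [← hbezout, norm_one] at hlt
  exact hlt.false

variable {K : Type*} [NontriviallyNormedField K] [IsUltrametricDist K] [CompleteSpace K]

-- The `n`-th powers are a neighbourhood of `1`, so they contain `u ^ p ^ k` for large `k`;
-- as `p ^ k` is prime to `n`, they then contain `u` itself.
lemma exists_pow_eq_of_norm_sub_one_lt_one {p n : ℕ} (hp : ‖(p : K)‖ < 1) (hpn : p.Coprime n)
    {u : K} (hu : ‖u - 1‖ < 1) : ∃ y : K, y ^ n = u := by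
  obtain ⟨k, hk⟩ := ((tendsto_pow_pow_nhds_one hp hu).eventually
    (range_pow_mem_nhds_one (natCast_ne_zero_of_coprime_of_norm_lt_one hp hpn))).exists
  exact (pow_mem_range_pow_of_coprime (hpn.pow_left k) u).mp hk

-- If `‖z‖ ≥ 1`, fix `q` with `0 < ‖q‖ < 1`. Every `1 + q * z⁻¹ ^ k` is an `m`-th power for all
-- `m` prime to `p`, hence a `w`-unit, which forces `w q ≤ w z ^ k` for all `k`.
lemma norm_lt_one_of_valuation_lt_one (w : Valuation K ℤᵐ⁰) {p : ℕ} (hp0 : p ≠ 0)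
    (hp : ‖(p : K)‖ < 1) {z : K} (hz : w z < 1) : ‖z‖ < 1 := by
  have hle {x : K} (hx : ‖x‖ < 1) : w x ≤ 1 := by
    have hx0 : 1 + x ≠ 0 := by
      intro h0
      rw [← neg_eq_of_add_eq_zero_right h0] at hx
      simp at hx
    have hone := valuation_eq_one_of_forall_coprime_exists_pow_eq w hp0 hx0 fun n hn ↦
      exists_pow_eq_of_norm_sub_one_lt_one hp hn (by simpa)
    simpa [hone] using w.map_sub (1 + x) 1
  by_contra! hnorm
  obtain ⟨q, hq0, hq⟩ := NormedField.exists_norm_lt_one K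
  obtain ⟨k, hk⟩ := exists_pow_lt₀ hz (Units.mk0 (w q) (by simpa using hq0))
  have hqk : ‖q / z ^ k‖ < 1 := by
    rw [norm_div, norm_pow]
    exact (div_le_self (norm_nonneg q) (one_le_pow₀ hnorm)).trans_lt hq
  have hzk : 0 < w (z ^ k) := by
    rw [Valuation.pos_iff]
    exact pow_ne_zero k (norm_pos_iff.mp (one_pos.trans_le hnorm))
  have hwqk := hle hqk
  rw [map_div₀, div_le_one₀ hzk, map_pow] at hwqk
  exact hwqk.not_gt hk

end UltrametricField

open WithZero in
lemma exists_pow_eq_one_add_of_valuation_lt_one {p : ℕ} [Fact p.Prime] {K : Type*}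
    [Field K] [Algebra ℚ_[p] K] [FiniteDimensional ℚ_[p] K] (w : Valuation K ℤᵐ⁰)
    {n : ℕ} (hpn : p.Coprime n) {z : K} (hz : w z < 1) : ∃ y : K, y ^ n = 1 + z := by
  let : NontriviallyNormedField K := spectralNorm.nontriviallyNormedField ℚ_[p] K
  let : NormedAlgebra ℚ_[p] K := spectralNorm.normedAlgebra ℚ_[p] K
  have : IsUltrametricDist K :=
    IsUltrametricDist.isUltrametricDist_of_isNonarchimedean_norm
      (isNonarchimedean_spectralNorm (K := ℚ_[p]) (L := K))
  have : CompleteSpace K := FiniteDimensional.complete ℚ_[p] K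
  have hp : ‖(p : K)‖ < 1 := by
    rw [← map_natCast (algebraMap ℚ_[p] K), norm_algebraMap']
    exact Padic.norm_p_lt_one
  refine exists_pow_eq_of_norm_sub_one_lt_one hp hpn ?_
  simpa using norm_lt_one_of_valuation_lt_one w (Fact.out : p.Prime).ne_zero hp hz

section TotallyRamified

open WithZero

/-- For normalized valuations `v` of `K` and `w` of `F`, the extension `F / K` is totally ramified:
the ramification index, read off from the restriction of `w` to `K`, is the degree `[F : K]`. -/
def IsTotallyRamified {K F : Type*} [Field K] [Field F] [Algebra K F] (v : Valuation K ℤᵐ⁰)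
    (w : Valuation F ℤᵐ⁰) : Prop :=
  ∀ x, w (algebraMap K F x) = v x ^ finrank K F

variable {K F : Type*} [Field K] [Field F] [Algebra K F] {v : Valuation K ℤᵐ⁰}
  {w : Valuation F ℤᵐ⁰} {π : F}

lemma log_valuation_algebraMap_mul_pow (hram : IsTotallyRamified v w)
    (hπ : w π = exp (-1)) {a : K} (ha : a ≠ 0) (i : ℕ) :
    log (w (algebraMap K F a * π ^ i)) = finrank K F * log (v a) - i := by
  have hva : v a ≠ 0 := v.ne_zero_iff.mpr ha
  rw [map_mul, map_pow, hram a, hπ, log_mul (pow_ne_zero _ hva) (pow_ne_zero _ exp_ne_zero),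
    log_pow, log_pow, log_exp]
  simp [sub_eq_add_neg]

lemma eq_of_valuation_algebraMap_mul_pow_eq (hram : IsTotallyRamified v w)
    (hπ : w π = exp (-1)) {a b : K} (ha : a ≠ 0) (hb : b ≠ 0) {i j : ℕ} (hi : i < finrank K F)
    (hj : j < finrank K F) (h : w (algebraMap K F a * π ^ i) = w (algebraMap K F b * π ^ j)) :
    i = j := by
  have hlog := congrArg log h
  rw [log_valuation_algebraMap_mul_pow hram hπ ha,
    log_valuation_algebraMap_mul_pow hram hπ hb] at hlog
  have hdvd : (finrank K F : ℤ) ∣ j - i := ⟨log (v b) - log (v a), by linear_combination hlog⟩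
  have := Int.eq_zero_of_abs_lt_dvd hdvd (by rw [abs_lt]; lia)
  lia

lemma exists_sum_algebraMap_mul_pow_eq (hram : IsTotallyRamified v w)
    (hπ : w π = exp (-1)) {c : Fin (finrank K F) → K} (hc : ∃ i, c i ≠ 0) :
    ∃ (a : K) (i : ℕ) (z : F), a ≠ 0 ∧ i < finrank K F ∧ w z < 1 ∧
      ∑ j, algebraMap K F (c j) * π ^ (j : ℕ) = algebraMap K F a * π ^ i * (1 + z) := by
  have hπ0 : π ≠ 0 := w.ne_zero_iff.mp (by simp [hπ])
  have hterm (j : Fin (finrank K F)) : algebraMap K F (c j) * π ^ (j : ℕ) ≠ 0 ↔ c j ≠ 0 := by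
    simp [hπ0]
  have hinj (i j : Fin (finrank K F)) (hi : algebraMap K F (c i) * π ^ (i : ℕ) ≠ 0)
      (hij : w (algebraMap K F (c i) * π ^ (i : ℕ)) = w (algebraMap K F (c j) * π ^ (j : ℕ))) :
      i = j := by
    have hj := w.ne_zero_iff.mp (hij ▸ w.ne_zero_iff.mpr hi)
    exact Fin.ext (eq_of_valuation_algebraMap_mul_pow_eq hram hπ ((hterm i).mp hi)
      ((hterm j).mp hj) i.2 j.2 hij)
  obtain ⟨i, z, hi, hz, hsum⟩ := exists_sum_eq_mul_one_add w hinj (by simpa only [hterm] using hc)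
  exact ⟨c i, i, z, (hterm i).mp hi, i.2, hz, hsum⟩

lemma linearIndependent_pow_of_valuation_eq_exp_neg_one
    (hram : IsTotallyRamified v w) (hπ : w π = exp (-1)) :
    LinearIndependent K fun j : Fin (finrank K F) ↦ π ^ (j : ℕ) := by
  rw [Fintype.linearIndependent_iff]
  intro c hc
  by_contra! hne
  obtain ⟨a, i, z, ha, -, hz, hsum⟩ := exists_sum_algebraMap_mul_pow_eq hram hπ hne
  have hπ0 : π ≠ 0 := w.ne_zero_iff.mp (by simp [hπ])
  simp_rw [← Algebra.smul_def, hc, Algebra.smul_def] at hsum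
  exact mul_ne_zero (mul_ne_zero (by simpa) (pow_ne_zero i hπ0))
    (one_add_ne_zero_of_valuation_lt_one w hz) hsum.symm

lemma exists_eq_algebraMap_mul_pow_mul_one_add [FiniteDimensional K F]
    (hram : IsTotallyRamified v w) (hπ : w π = exp (-1)) {t : F} (ht : t ≠ 0) :
    ∃ (a : K) (i : ℕ) (z : F), a ≠ 0 ∧ i < finrank K F ∧ w z < 1 ∧
      t = algebraMap K F a * π ^ i * (1 + z) := by
  have hli := linearIndependent_pow_of_valuation_eq_exp_neg_one hram hπ
  have hspan := hli.span_eq_top_of_card_eq_finrank' (Fintype.card_fin _)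
  obtain ⟨c, rfl⟩ := (Submodule.mem_span_range_iff_exists_fun K).mp
    (hspan ▸ Submodule.mem_top : t ∈ _)
  simp only [Algebra.smul_def] at ht ⊢
  refine exists_sum_algebraMap_mul_pow_eq hram hπ ?_
  by_contra! hc
  simp [hc] at ht

lemma exists_pow_finrank_eq_algebraMap_mul_one_add [FiniteDimensional K F]
    (hram : IsTotallyRamified v w) (hπ : w π = exp (-1)) {t : F} (ht : t ≠ 0) :
    ∃ (a : K) (z : F), w z < 1 ∧ t ^ finrank K F = algebraMap K F a * (1 + z) := by
  obtain ⟨a, i, z, ha, hi, hz, hpow⟩ :=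
    exists_eq_algebraMap_mul_pow_mul_one_add hram hπ (pow_ne_zero (finrank K F) ht)
  have hlog := congrArg (log ∘ w) hpow
  simp only [Function.comp_apply, map_mul _ _ (1 + z), w.map_one_add_of_lt hz, mul_one,
    log_valuation_algebraMap_mul_pow hram hπ ha, map_pow, log_pow, nsmul_eq_mul] at hlog
  have hdvd : (finrank K F : ℤ) ∣ i := ⟨log (v a) - log (w t), by linear_combination hlog⟩
  have hi0 : i = 0 := Nat.eq_zero_of_dvd_of_lt (by exact_mod_cast hdvd) hi
  exact ⟨a, z, hz, by simpa [hi0] using hpow⟩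

-- `1 + z` is an `n`-th power for all `n` prime to `p`, hence so is its norm.
lemma valuation_norm_one_add_eq_one (p : ℕ) [Fact p.Prime] [Algebra ℚ_[p] F]
    [FiniteDimensional ℚ_[p] F] [FiniteDimensional K F] (v : Valuation K ℤᵐ⁰) {z : F}
    (hz : w z < 1) : v (Algebra.norm K (1 + z)) = 1 := by
  refine valuation_eq_one_of_forall_coprime_exists_pow_eq v (Fact.out : p.Prime).ne_zero
    (Algebra.norm_ne_zero_iff.mpr (one_add_ne_zero_of_valuation_lt_one w hz)) fun n hn ↦ ?_
  obtain ⟨y, hy⟩ := exists_pow_eq_one_add_of_valuation_lt_one w hn hz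
  exact ⟨Algebra.norm K y, by rw [← hy, map_pow]⟩

lemma valuation_norm_eq (p : ℕ) [Fact p.Prime] [Algebra ℚ_[p] F] [FiniteDimensional ℚ_[p] F]
    [FiniteDimensional K F] (hram : IsTotallyRamified v w) (hπ : w π = exp (-1)) {t : F}
    (ht : t ≠ 0) : v (Algebra.norm K t) = w t := by
  obtain ⟨a, z, hz, hpow⟩ := exists_pow_finrank_eq_algebraMap_mul_one_add hram hπ ht
  refine (pow_left_inj₀ zero_le zero_le (finrank_pos (R := K) (M := F)).ne').mp ?_
  calc v (Algebra.norm K t) ^ finrank K F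
      = v (Algebra.norm K (t ^ finrank K F)) := by rw [map_pow, map_pow]
    _ = v a ^ finrank K F := by
      rw [hpow, map_mul, map_mul, valuation_norm_one_add_eq_one p v hz, mul_one,
        Algebra.norm_algebraMap, map_pow]
    _ = w (algebraMap K F a * (1 + z)) := by
      rw [map_mul, w.map_one_add_of_lt hz, mul_one, hram a]
    _ = w t ^ finrank K F := by rw [← hpow, map_pow]

lemma mem_normGroup_iff_exists_zpow_mul_pow {p : ℕ} [Fact p.Prime] [Algebra ℚ_[p] F]
    [FiniteDimensional ℚ_[p] F] [FiniteDimensional K F]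
    (hpn : p.Coprime (finrank K F)) (hram : IsTotallyRamified v w) (hπ : w π = exp (-1)) {x : K} :
    x ∈ normGroup K F ↔ ∃ (k : ℤ) (s : K), s ≠ 0 ∧ x = Algebra.norm K π ^ k * s ^ finrank K F := by
  constructor
  · rintro ⟨t, ht, rfl⟩
    obtain ⟨a, i, z, ha, -, hz, rfl⟩ := exists_eq_algebraMap_mul_pow_mul_one_add hram hπ ht
    obtain ⟨y, hy⟩ := exists_pow_eq_one_add_of_valuation_lt_one w hpn hz
    have hy0 : y ≠ 0 := by
      rintro rfl
      rw [zero_pow finrank_pos.ne'] at hy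
      exact one_add_ne_zero_of_valuation_lt_one w hz hy.symm
    refine ⟨i, a * Algebra.norm K y, mul_ne_zero ha (Algebra.norm_ne_zero_iff.mpr hy0), ?_⟩
    rw [← hy, map_mul, map_mul, map_pow, map_pow, Algebra.norm_algebraMap, zpow_natCast]
    ring
  · rintro ⟨k, s, hs, rfl⟩
    have hπ0 : π ≠ 0 := w.ne_zero_iff.mp (by simp [hπ])
    refine ⟨π ^ k * algebraMap K F s, mul_ne_zero (zpow_ne_zero k hπ0) (by simpa), ?_⟩
    rw [map_mul, Algebra.norm_zpow, Algebra.norm_algebraMap]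

lemma exists_eq_zpow_mul_pow_iff {c : K} (hc : v c = exp (-1)) {n : ℕ} (hn : n ≠ 0) {x : K}
    (hx : x ≠ 0) :
    (∃ (k : ℤ) (s : K), s ≠ 0 ∧ x = c ^ k * s ^ n) ↔ ∃ s, s ^ n = x * c ^ log (v x) := by
  have hc0 : c ≠ 0 := v.ne_zero_iff.mp (by simp [hc])
  constructor
  · rintro ⟨k, s, hs, rfl⟩
    have hvs : v s ≠ 0 := v.ne_zero_iff.mpr hs
    have hlog : log (v (c ^ k * s ^ n)) = -k + log (v s) * n := by
      rw [map_mul, map_zpow₀, map_pow, hc, log_mul (zpow_ne_zero k exp_ne_zero) (pow_ne_zero n hvs),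
        log_zpow, log_pow, log_exp]
      simp [mul_comm]
    refine ⟨s * c ^ log (v s), ?_⟩
    rw [hlog, zpow_add₀ hc0, zpow_neg, mul_pow, zpow_mul, zpow_natCast]
    field_simp
  · rintro ⟨s, hs⟩
    refine ⟨-log (v x), s, ?_, ?_⟩
    · rintro rfl
      simp [hn, hx, hc0, zpow_ne_zero] at hs
    · rw [hs, zpow_neg]
      field_simp

theorem mem_normGroup_iff_exists_pow_eq {p : ℕ} [Fact p.Prime] [Algebra ℚ_[p] F]
    [FiniteDimensional ℚ_[p] F] [FiniteDimensional K F] (hpn : p.Coprime (finrank K F))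
    (hram : IsTotallyRamified v w) (hπ : w π = exp (-1)) {x : K} (hx : x ≠ 0) :
    x ∈ normGroup K F ↔ ∃ s, s ^ finrank K F = x * Algebra.norm K π ^ log (v x) := by
  have hπ0 : π ≠ 0 := w.ne_zero_iff.mp (by simp [hπ])
  have hvπ : v (Algebra.norm K π) = exp (-1) := (valuation_norm_eq p hram hπ hπ0).trans hπ
  rw [mem_normGroup_iff_exists_zpow_mul_pow hpn hram hπ,
    exists_eq_zpow_mul_pow_iff hvπ finrank_pos.ne' hx]

end TotallyRamified

namespace IsNormalizedValuation

open WithZero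

variable {p : ℕ} [Fact p.Prime] {K : Type*} [Field K] [Algebra ℚ_[p] K] {v : K → ℤ}

open Classical in
/-- The multiplicative form of a normalized valuation, as a Mathlib `Valuation` with
`v x = n` corresponding to `exp (-n)`; it takes the value `0` at `0`, where `v` carries no
information. -/
noncomputable def toValuation (hv : IsNormalizedValuation p v) : Valuation K ℤᵐ⁰ where
  toFun x := if x = 0 then 0 else exp (-v x)
  map_zero' := if_pos rfl
  map_one' := by simpa using hv.1 1 1 one_ne_zero one_ne_zero
  map_mul' x y := by
    rcases eq_or_ne x 0 with rfl | hx
    · simp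
    rcases eq_or_ne y 0 with rfl | hy
    · simp
    simp only [hx, hy, mul_eq_zero, or_self, if_false, hv.1 x y hx hy, neg_add, exp_add]
  map_add_le_max' x y := by
    rcases eq_or_ne x 0 with rfl | hx
    · simp
    rcases eq_or_ne y 0 with rfl | hy
    · simp
    rcases eq_or_ne (x + y) 0 with hxy | hxy
    · simp [hxy]
    simp only [hx, hy, hxy, if_false, le_max_iff, exp_le_exp]
    have := hv.2.1 x y hx hy hxy
    lia

lemma toValuation_apply (hv : IsNormalizedValuation p v) {x : K} (hx : x ≠ 0) :
    hv.toValuation x = exp (-v x) :=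
  if_neg hx

lemma isTotallyRamified {F : Type*} [Field F] [Algebra ℚ_[p] F] [Algebra K F] {w : F → ℤ}
    (hv : IsNormalizedValuation p v) (hw : IsNormalizedValuation p w) (hdeg : finrank K F ≠ 0)
    (hram : ∀ x : K, x ≠ 0 → w (algebraMap K F x) = finrank K F * v x) :
    IsTotallyRamified hv.toValuation hw.toValuation := by
  intro x
  rcases eq_or_ne x 0 with rfl | hx
  · simp [hdeg]
  rw [hw.toValuation_apply (by simpa), hv.toValuation_apply hx, hram x hx, ← exp_nsmul,
    nsmul_eq_mul, mul_neg]

end IsNormalizedValuation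

theorem stmt_4_general (p : ℕ) [Fact p.Prime]
    (K : Type*) [Field K] [Algebra ℚ_[p] K] [FiniteDimensional ℚ_[p] K]
    (vK : K → ℤ) (hvK : IsNormalizedValuation p vK)
    (F : Type*) [Field F] [Algebra K F] [Algebra ℚ_[p] F] [IsScalarTower ℚ_[p] K F]
    (hF : p.Coprime (finrank K F))
    (vF : F → ℤ) (hvF : IsNormalizedValuation p vF)
    (hram : ∀ x : K, x ≠ 0 → vF (algebraMap K F x) = finrank K F * vK x)
    (πF : F) (hπF0 : πF ≠ 0) (hπF : vF πF = 1)
    (πK : K) (hπK : Algebra.norm K πF = πK) :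
    ∀ x : K, x ≠ 0 → (x ∈ normGroup K F ↔ ∃ s, s ^ finrank K F = x * πK ^ (-(vK x))) := by
  intro x hx
  have hdeg : finrank K F ≠ 0 := by
    intro h
    exact (Fact.out : p.Prime).ne_one (by simpa [h] using hF)
  have : FiniteDimensional K F := FiniteDimensional.of_finrank_pos (Nat.pos_of_ne_zero hdeg)
  have : FiniteDimensional ℚ_[p] F := FiniteDimensional.trans ℚ_[p] K F
  have hπ : hvF.toValuation πF = WithZero.exp (-1) := by rw [hvF.toValuation_apply hπF0, hπF]
  rw [mem_normGroup_iff_exists_pow_eq hF (hvK.isTotallyRamified hvF hdeg hram) hπ hx,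
    hvK.toValuation_apply hx, WithZero.log_exp, hπK]

/-- Lemma 3.1(ii): let `p` be an odd prime, `F/K` a ramified quadratic extension of `p`-adic
fields, `π_F` a uniformizer of `F` and `π_K = N_{F/K}(π_F)`. Then `x ∈ K*` is a norm from `F`
if and only if `x · π_K^{-v_K(x)}` is a square. -/
theorem stmt_4 (p : ℕ) [Fact p.Prime] (hp : p ≠ 2)
    (K : Type*) [Field K] [Algebra ℚ_[p] K] [FiniteDimensional ℚ_[p] K]
    (vK : K → ℤ) (hvK : IsNormalizedValuation p vK)
    (F : Type*) [Field F] [Algebra K F] [Algebra ℚ_[p] F] [IsScalarTower ℚ_[p] K F]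
    (hF2 : finrank K F = 2)
    (vF : F → ℤ) (hvF : IsNormalizedValuation p vF)
    (hram : ∀ x : K, x ≠ 0 → vF (algebraMap K F x) = 2 * vK x)
    (πF : F) (hπF0 : πF ≠ 0) (hπF : vF πF = 1)
    (πK : K) (hπK : Algebra.norm K πF = πK) :
    ∀ x : K, x ≠ 0 → (x ∈ normGroup K F ↔ IsSquare (x * πK ^ (-(vK x)))) := by
  have hcop : p.Coprime (finrank K F) := hF2 ▸ (Nat.coprime_primes Fact.out Nat.prime_two).mpr hp
  simpa only [hF2, isSquare_iff_exists_sq, eq_comm] using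
    stmt_4_general p K vK hvK F hcop vF hvF (by simpa [hF2] using hram) πF hπF0 hπF πK hπK
end

section
/- Let p be an odd prime, K a finite extension of ℚ_p with normalized discrete valuation v_K, and let e ∈ K* with v_K(e) odd. Let d ∈ K* be a non-square such that de ∉ (K*)² (so L = K(√d) and E = K(√e) are non-isomorphic quadratic extensions of K). Then −e ∉ N_{L/K}(L*). -/
open Module

open scoped WithZero

/-!
If `-e` is a norm from `K(√d)`, then `d y² = x² + e`. As `v e` is odd, one of `x²` and `e` strictly
dominates; since `1 + u` is a square whenever `v u > 0`, the sum has the square class of the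
dominating term, so `d` or `d e` is a square.

If `1 + u` is not a square, the nontrivial automorphism of `K(√(1 + u))` exchanges `√(1 + u) - 1`
and `-(√(1 + u) + 1)`, so these have the same spectral norm `r`. Their product gives `r² = |u|`, and
the difference `2` of `√(1 + u) ± 1` gives `|2| ≤ r`; hence `1 = |4| ≤ |u|`.

That `v u > 0` implies `|u| < 1` only needs `v` to be nonnegative on `ℤ_[p]`, since elements of
spectral norm at most `1` are roots of monic polynomials over `ℤ_[p]`. This is forced by algebra
alone: elements of `1 + p ℤ_[p]` have `n`-th roots for all `n` prime to `p`, so their valuation is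
divisible by infinitely many integers, and `z ^ p - z` lies in `p ℤ_[p]` for every `z`.
-/

theorem exists_norm_eq_sq_sub_mul_sq {K L : Type*} [Field K] [Field L] [Algebra K L]
    (hL : finrank K L = 2) {d : K} (hd : ¬ IsSquare d) {s : L} (hs : s ^ 2 = algebraMap K L d)
    (t : L) : ∃ x y : K, Algebra.norm K t = x ^ 2 - d * y ^ 2 := by
  -- makes `QuadraticAlgebra K d 0` a field
  have : Fact (∀ r : K, r ^ 2 ≠ d + 0 * r) := ⟨fun r hr ↦ hd ⟨r, by linear_combination -hr⟩⟩
  have : FiniteDimensional K L := .of_finrank_eq_succ hL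
  let f : QuadraticAlgebra K d 0 →ₐ[K] L :=
    QuadraticAlgebra.lift ⟨s, by simp [← sq, hs, Algebra.algebraMap_eq_smul_one]⟩
  have hfinrank : finrank K (QuadraticAlgebra K d 0) = finrank K L := by
    rw [hL, QuadraticAlgebra.finrank_eq_two]
  have hf : Function.Bijective f := ⟨f.injective,
    (LinearMap.injective_iff_surjective_of_finrank_eq_finrank (f := f.toLinearMap) hfinrank).1
      f.injective⟩
  obtain ⟨z, rfl⟩ := hf.surjective t
  refine ⟨z.re, z.im, ?_⟩
  calc Algebra.norm K (f z) = Algebra.norm K z :=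
        Algebra.norm_eq_of_algEquiv (.ofBijective f hf) z
    _ = z.norm := QuadraticAlgebra.det_toLinearMap_eq_norm z
    _ = z.re ^ 2 - d * z.im ^ 2 := by rw [QuadraticAlgebra.norm_def]; ring

theorem isSquare_mul_add_of_valuation_lt {K Γ₀ : Type*} [Field K]
    [LinearOrderedCommGroupWithZero Γ₀] {v : Valuation K Γ₀}
    (hsq : ∀ u, v u < 1 → IsSquare (1 + u)) {x y : K} (hxy : v x < v y) :
    IsSquare (y * (x + y)) := by
  have hy : y ≠ 0 := v.ne_zero_iff.1 (zero_le.trans_lt hxy).ne'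
  have hu : v (x / y) < 1 := by rwa [map_div₀, div_lt_one₀ (zero_le.trans_lt hxy)]
  have : y * (x + y) = y ^ 2 * (1 + x / y) := by field_simp; ring
  exact this ▸ (IsSquare.sq y).mul (hsq _ hu)

theorem neg_notMem_normGroup {K Γ₀ : Type*} [Field K] [LinearOrderedCommGroupWithZero Γ₀]
    {v : Valuation K Γ₀} (hsq : ∀ u, v u < 1 → IsSquare (1 + u)) {d e : K}
    (he : ¬ IsSquare (v e)) (hd : ¬ IsSquare d) (hde : ¬ IsSquare (d * e))
    {L : Type*} [Field L] [Algebra K L] (hL : finrank K L = 2)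
    (hs : ∃ s : L, s ^ 2 = algebraMap K L d) : -e ∉ normGroup K L := by
  rintro ⟨t, -, ht⟩
  obtain ⟨s, hs⟩ := hs
  obtain ⟨x, y, hxy⟩ := exists_norm_eq_sq_sub_mul_sq hL hd hs t
  have hsum : x ^ 2 + e = d * y ^ 2 := by linear_combination ht - hxy
  have hv : v (x ^ 2) ≠ v e := fun h ↦ he (h ▸ (IsSquare.sq x).map v)
  have hy : y ≠ 0 := by
    rintro rfl
    refine hv ?_
    rw [show e = -x ^ 2 by linear_combination hsum, Valuation.map_neg]
  obtain hlt | hlt := hv.lt_or_gt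
  · have : IsSquare (d * e * y ^ 2) := by
      convert isSquare_mul_add_of_valuation_lt hsq hlt using 1
      linear_combination -e * hsum
    refine hde ?_
    simpa [hy] using this.div (IsSquare.sq y)
  · have hx : x ≠ 0 := by
      rintro rfl
      simp at hlt
    have : IsSquare (d * (x * y) ^ 2) := by
      convert isSquare_mul_add_of_valuation_lt hsq hlt using 1
      linear_combination -x ^ 2 * hsum
    refine hd ?_
    simpa [hx, hy] using this.div (IsSquare.sq (x * y))

theorem spectralNorm_algHom_apply {F K : Type*} [NormedField F] [Field K] [Algebra F K]
    (σ : K →ₐ[F] K) (x : K) : spectralNorm F K (σ x) = spectralNorm F K x :=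
  congrArg spectralValue (minpoly.algHom_eq σ σ.injective x)

theorem valuation_le_one_of_monic_of_eval_eq_zero {R Γ₀ : Type*} [CommRing R]
    [LinearOrderedCommGroupWithZero Γ₀] {v : Valuation R Γ₀} {f : Polynomial R} (hf : f.Monic)
    (hcoeff : ∀ n, v (f.coeff n) ≤ 1) {x : R} (hx : f.eval x = 0) : v x ≤ 1 := by
  have hsub : (f.coeffs : Set R) ⊆ v.integer := fun a ha ↦ by
    obtain ⟨n, -, rfl⟩ := Polynomial.mem_coeffs_iff.1 ha
    exact hcoeff n
  have hint : IsIntegral v.integer x := by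
    refine ⟨f.toSubring v.integer hsub, (f.monic_toSubring _ hsub).2 hf, ?_⟩
    rw [Polynomial.eval₂_eq_eval_map]
    exact (congrArg _ (f.map_toSubring _ hsub)).trans hx
  exact (Valuation.integer.integers v).isIntegral_iff_v_le_one.1 hint

section SpectralNorm

variable {F K : Type*} [NontriviallyNormedField F] [CompleteSpace F] [IsUltrametricDist F]
  [Field K] [Algebra F K] [Algebra.IsAlgebraic F K]

theorem norm_four_le_spectralNorm_sq_sub_one {σ : K →ₐ[F] K} {ω : K} (hω : σ ω = -ω) :
    ‖(4 : F)‖ ≤ spectralNorm F K (ω ^ 2 - 1) := by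
  let N := spectralMulAlgNorm F K
  have hconj : N (ω - 1) = N (ω + 1) := by
    calc N (ω - 1) = N (σ (ω - 1)) := (spectralNorm_algHom_apply σ _).symm
      _ = N (-(ω + 1)) := by rw [map_sub, map_one, hω, neg_add']
      _ = N (ω + 1) := map_neg_eq_map N _
  have htwo : ‖(2 : F)‖ ≤ N (ω + 1) := by
    calc ‖(2 : F)‖ = N (algebraMap F K 2) := (spectralNorm_extends 2).symm
      _ = N ((ω + 1) + -(ω - 1)) := by rw [map_ofNat]; ring_nf
      _ ≤ max (N (ω + 1)) (N (-(ω - 1))) := isNonarchimedean_spectralNorm _ _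
      _ = N (ω + 1) := by rw [map_neg_eq_map, hconj, max_self]
  calc ‖(4 : F)‖ = ‖(2 : F)‖ * ‖(2 : F)‖ := by rw [← norm_mul]; norm_num
    _ ≤ N (ω + 1) * N (ω - 1) := by rw [hconj]; gcongr
    _ = N (ω ^ 2 - 1) := by rw [← map_mul]; ring_nf

theorem isSquare_one_add_of_spectralNorm_lt {u : K} (hu : spectralNorm F K u < ‖(4 : F)‖) :
    IsSquare (1 + u) := by
  by_contra hsq
  have : Fact (∀ r : K, r ^ 2 ≠ (1 + u) + 0 * r) := ⟨fun r hr ↦ hsq ⟨r, by linear_combination -hr⟩⟩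
  let ω : QuadraticAlgebra K (1 + u) 0 := .omega
  have hω : ω * ω = (1 + u) • 1 + (0 : K) • ω := QuadraticAlgebra.omega_mul_omega_eq_add
  let σ : QuadraticAlgebra K (1 + u) 0 →ₐ[K] _ :=
    QuadraticAlgebra.lift ⟨-ω, by rw [neg_mul_neg, hω, zero_smul, zero_smul]⟩
  have hσ : σ ω = -ω := by simp [σ, ω, QuadraticAlgebra.lift_apply_apply]
  have hu' : ω ^ 2 - 1 = algebraMap K _ u := by
    rw [sq, hω, zero_smul, add_zero, add_smul, one_smul, add_sub_cancel_left,
      Algebra.algebraMap_eq_smul_one]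
  have : Algebra.IsAlgebraic F (QuadraticAlgebra K (1 + u) 0) := .trans F K _
  have hle := norm_four_le_spectralNorm_sq_sub_one (F := F) (σ := σ.restrictScalars F) hσ
  rw [hu', ← spectralNorm.eq_of_tower] at hle
  exact hu.not_ge hle

theorem spectralNorm_lt_one_of_valuation_lt_one {Γ₀ : Type*} [LinearOrderedCommGroupWithZero Γ₀]
    {v : Valuation K Γ₀} (hv : ∀ z : F, ‖z‖ ≤ 1 → v (algebraMap F K z) ≤ 1) {x : K}
    (hx : v x < 1) : spectralNorm F K x < 1 := by
  by_contra! h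
  have hx0 : x ≠ 0 := by
    rintro rfl
    exact h.not_gt (spectralNorm_zero.trans_lt one_pos)
  have hinv : spectralNorm F K x⁻¹ ≤ 1 := by
    have : spectralNorm F K x⁻¹ = (spectralNorm F K x)⁻¹ := map_inv₀ (spectralMulAlgNorm F K) x
    exact this.trans_le (inv_le_one_of_one_le₀ h)
  have hmonic : (minpoly F x⁻¹).Monic := minpoly.monic (Algebra.IsIntegral.isIntegral _)
  have hle : v x⁻¹ ≤ 1 :=
    valuation_le_one_of_monic_of_eval_eq_zero (hmonic.map (algebraMap F K))
      (fun n ↦ by simpa using hv _ ((spectralValue_le_one_iff hmonic).1 hinv n))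
      (by simp [Polynomial.eval_map_algebraMap])
  rw [map_inv₀] at hle
  exact hx.not_ge ((inv_le_one₀ (by simpa [zero_lt_iff])).1 hle)

end SpectralNorm

theorem exists_pow_eq_one_add_of_mem {R : Type*} [CommRing R] {I : Ideal R} [HenselianRing R I]
    {n : ℕ} (hn : IsUnit (n : R)) {x : R} (hx : x ∈ I) : ∃ y, y ^ n = 1 + x := by
  obtain rfl | hn0 := eq_or_ne n 0
  · have : Subsingleton R := by
      simpa [isUnit_zero_iff, eq_comm, subsingleton_iff_zero_eq_one] using hn
    exact ⟨1, Subsingleton.elim _ _⟩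
  let f : Polynomial R := .X ^ n - .C (1 + x)
  have hf : f.eval 1 ∈ I := by simpa [f] using hx
  have hf' : f.derivative.eval 1 = n := by simp [f, Polynomial.derivative_X_pow]
  obtain ⟨y, hy, -⟩ := HenselianRing.is_henselian f
    (Polynomial.monic_X_pow_sub_C _ hn0) 1 hf (hf' ▸ hn.map (Ideal.Quotient.mk I))
  exact ⟨y, by simpa [f, sub_eq_zero] using hy⟩

theorem eq_one_of_forall_exists_pow_eq {γ : ℤᵐ⁰} (hγ : γ ≠ 0)
    (h : ∀ N : ℕ, ∃ n > N, ∃ δ : ℤᵐ⁰, δ ^ n = γ) : γ = 1 := by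
  obtain ⟨n, hn, δ, rfl⟩ := h γ.log.natAbs
  have : (δ ^ n).log = 0 :=
    Int.eq_zero_of_dvd_of_natAbs_lt_natAbs (d := n) (by simp) (by simpa using hn)
  rw [← WithZero.exp_log hγ, this, WithZero.exp_zero]

section PadicInt

variable {p : ℕ} [Fact p.Prime]

theorem valuation_one_add_eq_one_of_mem_maximalIdeal (w : Valuation ℤ_[p] ℤᵐ⁰) {x : ℤ_[p]}
    (hx : x ∈ IsLocalRing.maximalIdeal ℤ_[p]) : w (1 + x) = 1 := by
  have hunit : IsUnit (1 + x) := by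
    simpa [add_comm] using
      Ideal.mem_jacobson_bot.1 (IsLocalRing.maximalIdeal_le_jacobson ⊥ hx) 1
  refine eq_one_of_forall_exists_pow_eq (hunit.map w).ne_zero fun N ↦ ?_
  have hn : IsUnit ((N * p + 1 : ℕ) : ℤ_[p]) :=
    PadicInt.isUnit_iff.2 <| PadicInt.norm_natCast_eq_one_iff.2 (by simp)
  obtain ⟨y, hy⟩ := exists_pow_eq_one_add_of_mem hn hx
  exact ⟨N * p + 1, Nat.lt_succ_of_le (Nat.le_mul_of_pos_right N (NeZero.pos p)), w y,
    by rw [← hy, map_pow]⟩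

theorem valuation_padicInt_le_one (w : Valuation ℤ_[p] ℤᵐ⁰) (z : ℤ_[p]) : w z ≤ 1 := by
  by_contra! hz
  have hmem : z ^ p - z ∈ IsLocalRing.maximalIdeal ℤ_[p] := by
    rw [← PadicInt.ker_toZMod, RingHom.mem_ker, map_sub, map_pow, ZMod.pow_card, sub_self]
  have hle : w (z ^ p - z) ≤ 1 := by
    have := w.map_sub (1 + (z ^ p - z)) 1
    rwa [valuation_one_add_eq_one_of_mem_maximalIdeal w hmem, map_one, max_self,
      add_sub_cancel_left] at this
  have hlt : w z < w (z ^ p) := by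
    rw [map_pow]; exact lt_self_pow₀ hz (Fact.out : p.Prime).one_lt
  rw [w.map_sub_eq_of_lt_left hlt] at hle
  exact (hz.trans hlt).not_ge hle

theorem valuation_algebraMap_padic_le_one {K : Type*} [Field K] [Algebra ℚ_[p] K]
    (v : Valuation K ℤᵐ⁰) {z : ℚ_[p]} (hz : ‖z‖ ≤ 1) : v (algebraMap ℚ_[p] K z) ≤ 1 :=
  valuation_padicInt_le_one (v.comap ((algebraMap ℚ_[p] K).comp PadicInt.Coe.ringHom)) ⟨z, hz⟩

end PadicInt

namespace IsNormalizedValuation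

variable {p : ℕ} [Fact p.Prime] {K : Type*} [Field K] [Algebra ℚ_[p] K] {v : K → ℤ}

theorem map_one (hv : IsNormalizedValuation p v) : v 1 = 0 := by
  have := hv.1 1 1 one_ne_zero one_ne_zero
  rw [mul_one] at this
  lia

open Classical in
/-- The normalized valuation of a `p`-adic field in multiplicative notation, `x ↦ exp (-v x)` with
`0 ↦ 0`; the junk value `v 0` is discarded. -/
noncomputable def valuation (hv : IsNormalizedValuation p v) : Valuation K ℤᵐ⁰ where
  toFun x := if x = 0 then 0 else WithZero.exp (-v x)
  map_zero' := if_pos rfl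
  map_one' := by simp [hv.map_one]
  map_mul' x y := by
    by_cases hx : x = 0
    · simp [hx]
    by_cases hy : y = 0
    · simp [hy]
    simp only [mul_eq_zero, hx, hy, or_self, if_false, hv.1 x y hx hy, neg_add, WithZero.exp_add]
  map_add_le_max' x y := by
    by_cases hx : x = 0
    · simp [hx]
    by_cases hy : y = 0
    · simp [hy]
    by_cases hxy : x + y = 0
    · simp [hxy]
    have := hv.2.1 x y hx hy hxy
    simp only [hx, hy, hxy, if_false, le_max_iff, WithZero.exp_le_exp]
    lia

theorem not_isSquare_valuation (hv : IsNormalizedValuation p v) {x : K} (hx : x ≠ 0)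
    (hodd : Odd (v x)) : ¬ IsSquare (hv.valuation x) := by
  rintro ⟨γ, hγ⟩
  have : hv.valuation x = WithZero.exp (-v x) := if_neg hx
  have hlog := congrArg WithZero.log (this.symm.trans hγ)
  rw [WithZero.log_exp, ← sq, WithZero.log_pow, nsmul_eq_mul] at hlog
  grind

end IsNormalizedValuation

theorem stmt_7_general {p : ℕ} [Fact p.Prime] (hp : p ≠ 2) {K : Type*} [Field K] [Algebra ℚ_[p] K]
    [Algebra.IsAlgebraic ℚ_[p] K] (v : Valuation K ℤᵐ⁰) {d e : K} (he : ¬ IsSquare (v e))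
    (hd : ¬ IsSquare d) (hde : ¬ IsSquare (d * e)) {L : Type*} [Field L] [Algebra K L]
    (hL : finrank K L = 2) (hs : ∃ s : L, s ^ 2 = algebraMap K L d) : -e ∉ normGroup K L := by
  have hfour : ‖(4 : ℚ_[p])‖ = 1 := by
    have : p.Coprime (2 ^ 2) := .pow_right 2 ((Nat.coprime_primes Fact.out Nat.prime_two).2 hp)
    exact_mod_cast Padic.norm_natCast_eq_one_iff.2 this
  have hsq (u : K) (hu : v u < 1) : IsSquare (1 + u) := by
    refine isSquare_one_add_of_spectralNorm_lt (F := ℚ_[p]) ?_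
    rw [hfour]
    exact spectralNorm_lt_one_of_valuation_lt_one
      (fun z hz ↦ valuation_algebraMap_padic_le_one v hz) hu
  exact neg_notMem_normGroup hsq he hd hde hL hs

/-- Case (2) of the proof of Theorem 1.2: `p` an odd prime, `K` a `p`-adic field,
`e ∈ K*` of odd valuation, `d ∈ K*` a non-square with `de ∉ (K*)²` (so `L = K(√d)` and
`E = K(√e)` are non-isomorphic quadratic extensions). Then `-e ∉ N_{L/K}(L*)`. -/
theorem stmt_7 (p : ℕ) [Fact p.Prime] (hp : p ≠ 2)
    (K : Type*) [Field K] [Algebra ℚ_[p] K] [FiniteDimensional ℚ_[p] K]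
    (vK : K → ℤ) (hvK : IsNormalizedValuation p vK)
    (e : K) (he0 : e ≠ 0) (hve : Odd (vK e))
    (d : K) (hd0 : d ≠ 0) (hd : ¬ IsSquare d) (hde : ¬ IsSquare (d * e))
    (L : Type*) [Field L] [Algebra K L] (hL2 : finrank K L = 2)
    (hLd : ∃ s : L, s ^ 2 = algebraMap K L d) :
    -e ∉ normGroup K L :=
  stmt_7_general hp hvK.valuation (hvK.not_isSquare_valuation he0 hve) hd hde hL2 hLd
end
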